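/- Let 1 < c < 11/6 and let 0 < ε < 10^{-10} be a sufficiently small constant. Then Σ_{n ≤ x, ⌊n^c⌋ cube-free} 1 = x/ζ(3) + O(x^{1-ε}). -/

import Mathlib

open Filter Asymptotics Finset
open scoped Classical

/-- A natural number is cube-free if no prime cube divides it. -/
def CubeFree (n : ℕ) : Prop := ∀ p : ℕ, p.Prime → ¬ p ^ 3 ∣ n

/-- `ζ(3) = ∑ 1/n³`. -/
noncomputable def zeta3 : ℝ := ∑' n : ℕ, 1 / (n : ℝ) ^ 3

/-!
Möbius inversion over cubes gives `#{n | ⌊n ^ c⌋ cube-free} = ∑ d, μ d * #{n | d ^ 3 ∣ ⌊n ^ c⌋}`,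
and `d ^ 3 ∣ ⌊n ^ c⌋` says that the fractional part of `n ^ c / d ^ 3` is less than `1 / d ^ 3`.
The Kusmin–Landau inequality and van der Corput's second derivative test bound the exponential sums
with phase `h * n ^ c / d ^ 3`. Fix `δ > 0` small in terms of `2 - c`.
For `d ≤ x ^ (2 * δ)` the fractional parts are equidistributed, with total discrepancy below the
error term. For `d` up to nearly `x ^ (c / 4)` an upper bound suffices, and the Fejér kernel yields
`x ^ (1 - 2 * δ) / d`: far from the expected count `x / d ^ 3`, but summable with a power saving.
For larger `d` the integers `⌊n ^ c⌋` are distinct, so at most `x ^ c / d ^ 3` of them are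
divisible by `d ^ 3`.
-/

section KusminLandau

open Real FourierTransform

lemma fourierChar_sub_intCast (t : ℝ) (k : ℤ) : 𝐞 (t - k) = 𝐞 t := by
  have h_one : 𝐞 (k : ℝ) = 1 := by
    ext
    rw [fourierChar_apply, Circle.coe_one, Complex.exp_eq_one_iff]
    exact ⟨k, by push_cast; ring⟩
  rw [AddChar.map_sub_eq_div, h_one, div_one]

lemma re_fourierChar (t : ℝ) : (𝐞 t : ℂ).re = cos (2 * π * t) := by
  rw [fourierChar_apply, Complex.exp_ofReal_mul_I_re]

lemma norm_one_sub_fourierChar (t : ℝ) : ‖1 - (𝐞 t : ℂ)‖ = 2 * |sin (π * t)| := by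
  rw [norm_sub_rev, fourierChar_apply, mul_comm, Complex.norm_exp_I_mul_ofReal_sub_one,
    norm_mul, norm_two, norm_eq_abs]
  ring_nf

lemma inv_one_sub_fourierChar {t : ℝ} (ht : sin (π * t) ≠ 0) :
    (1 - (𝐞 t : ℂ))⁻¹ = 1 / 2 + (cot (π * t) / 2 : ℝ) * Complex.I := by
  refine inv_eq_of_mul_eq_one_right ?_
  have h_sq : ((sin (π * t) : ℝ) : ℂ) ^ 2 + ((cos (π * t) : ℝ) : ℂ) ^ 2 = 1 :=
    mod_cast sin_sq_add_cos_sq (π * t)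
  rw [fourierChar_apply, Complex.exp_mul_I, ← Complex.ofReal_cos, ← Complex.ofReal_sin,
    mul_assoc 2, cos_two_mul, sin_two_mul, cot_eq_cos_div_sin]
  generalize sin (π * t) = s at ht h_sq ⊢
  generalize cos (π * t) = c at h_sq ⊢
  have hs : (s : ℂ) ≠ 0 := Complex.ofReal_ne_zero.2 ht
  push_cast
  field_simp
  linear_combination (-2 * c * Complex.I) * h_sq - 2 * s * c ^ 2 * Complex.I_sq

lemma two_mul_le_sin_pi_mul {Δ t : ℝ} (hΔ : 0 ≤ Δ) (ht : t ∈ Set.Icc Δ (1 - Δ)) :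
    2 * Δ ≤ sin (π * t) := by
  have two_mul_le : ∀ s, Δ ≤ s → s ≤ 1 / 2 → 2 * Δ ≤ sin (π * s) := fun s h₁ h₂ => by
    have h := mul_le_sin (x := π * s) (by have := pi_pos; nlinarith) (by nlinarith [pi_pos])
    rw [show 2 / π * (π * s) = 2 * s by field_simp] at h
    linarith
  rcases le_total t (1 / 2) with h | h
  · exact two_mul_le t ht.1 h
  · rw [← sin_pi_sub, ← mul_one_sub]
    exact two_mul_le (1 - t) (by linarith [ht.2]) (by linarith)

lemma abs_cot_pi_mul_le {Δ t : ℝ} (hΔ : 0 < Δ) (ht : t ∈ Set.Icc Δ (1 - Δ)) :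
    |cot (π * t)| ≤ 1 / (2 * Δ) := by
  have h_sin := two_mul_le_sin_pi_mul hΔ.le ht
  rw [cot_eq_cos_div_sin, abs_div, abs_of_pos (a := sin _) (by linarith)]
  exact div_le_div₀ zero_le_one (abs_cos_le_one _) (by linarith) h_sin

lemma cot_antitoneOn : AntitoneOn cot (Set.Ioo 0 π) := fun s hs t ht hst => by
  have h : 0 ≤ sin (t - s) :=
    sin_nonneg_of_nonneg_of_le_pi (sub_nonneg.2 hst) (by linarith [hs.1, ht.2])
  rw [sin_sub] at h
  rw [cot_eq_cos_div_sin, cot_eq_cos_div_sin,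
    div_le_div_iff₀ (sin_pos_of_mem_Ioo ht) (sin_pos_of_mem_Ioo hs)]
  linarith

lemma norm_sum_Ico_le_of_eq_sub_mul {R : Type*} [NormedRing R] {u w : ℕ → R} {a m : ℕ}
    (ham : a ≤ m) (hu : ∀ n, ‖u n‖ ≤ 1) (h : ∀ n ∈ Set.Icc a m, u n = (u n - u (n + 1)) * w n) :
    ‖∑ n ∈ Ico a (m + 1), u n‖ ≤ ‖w a‖ + ‖w m‖ + ∑ n ∈ Ico a m, ‖w (n + 1) - w n‖ := by
  have by_parts : ∑ n ∈ Ico a (m + 1), u n =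
      u a * w a - u (m + 1) * w m + ∑ n ∈ Ico a m, u (n + 1) * (w (n + 1) - w n) := by
    induction m, ham using Nat.le_induction with
    | base =>
      have := h a ⟨le_rfl, le_rfl⟩
      rw [sub_mul] at this
      simpa using this
    | succ m ham ih =>
      have hm := h (m + 1) ⟨by omega, le_rfl⟩
      rw [sum_Ico_succ_top (by omega : a ≤ m + 1),
        ih fun n hn => h n ⟨hn.1, Nat.le_succ_of_le hn.2⟩, sum_Ico_succ_top ham]
      nth_rw 2 [hm]
      noncomm_ring
  have mul_le (n : ℕ) (v : R) : ‖u n * v‖ ≤ ‖v‖ :=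
    (norm_mul_le _ _).trans (mul_le_of_le_one_left (norm_nonneg _) (hu n))
  rw [by_parts]
  refine (norm_add_le _ _).trans (add_le_add ?_ ?_)
  · exact (norm_sub_le _ _).trans (add_le_add (mul_le _ _) (mul_le _ _))
  · exact (norm_sum_le _ _).trans (sum_le_sum fun n _ => mul_le _ _)

lemma norm_sub_inv_one_sub_fourierChar {s t : ℝ} (hs : s ∈ Set.Ioo 0 1) (ht : t ∈ Set.Ioo 0 1)
    (hst : s ≤ t) :
    ‖(1 - (𝐞 t : ℂ))⁻¹ - (1 - (𝐞 s : ℂ))⁻¹‖ = (cot (π * s) - cot (π * t)) / 2 := by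
  have pi_mul_mem {r : ℝ} (hr : r ∈ Set.Ioo 0 1) : π * r ∈ Set.Ioo 0 π :=
    ⟨mul_pos pi_pos hr.1, mul_lt_of_lt_one_right pi_pos hr.2⟩
  have h_cot : cot (π * t) ≤ cot (π * s) :=
    cot_antitoneOn (pi_mul_mem hs) (pi_mul_mem ht) (mul_le_mul_of_nonneg_left hst pi_pos.le)
  rw [inv_one_sub_fourierChar (sin_pos_of_mem_Ioo (pi_mul_mem hs)).ne',
    inv_one_sub_fourierChar (sin_pos_of_mem_Ioo (pi_mul_mem ht)).ne', add_sub_add_left_eq_sub,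
    ← sub_mul, norm_mul, Complex.norm_I, mul_one, ← Complex.ofReal_sub, Complex.norm_real,
    norm_eq_abs, ← sub_div, abs_of_nonpos (by linarith)]
  ring

lemma norm_inv_one_sub_fourierChar_le {Δ t : ℝ} (hΔ : 0 < Δ) (ht : t ∈ Set.Icc Δ (1 - Δ)) :
    ‖(1 - (𝐞 t : ℂ))⁻¹‖ ≤ 1 / (4 * Δ) := by
  have h_sin := (two_mul_le_sin_pi_mul hΔ.le ht).trans (le_abs_self _)
  rw [norm_inv, norm_one_sub_fourierChar, ← one_div]
  exact one_div_le_one_div_of_le (by positivity) (by linarith)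

lemma sum_norm_sub_inv_one_sub_fourierChar_le {g : ℕ → ℝ} {a m : ℕ} {Δ : ℝ} (hΔ : 0 < Δ)
    (ham : a ≤ m) (hmono : MonotoneOn g (Set.Icc a m))
    (hmem : ∀ n ∈ Set.Icc a m, g n ∈ Set.Icc Δ (1 - Δ)) :
    ∑ n ∈ Ico a m, ‖(1 - (𝐞 (g (n + 1)) : ℂ))⁻¹ - (1 - (𝐞 (g n) : ℂ))⁻¹‖ ≤ 1 / (2 * Δ) := by
  have hg₀₁ : ∀ n ∈ Set.Icc a m, g n ∈ Set.Ioo 0 1 := fun n hn =>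
    ⟨by linarith [(hmem n hn).1], by linarith [(hmem n hn).2]⟩
  calc
    _ = ∑ n ∈ Ico a m, (cot (π * g n) - cot (π * g (n + 1))) / 2 := sum_congr rfl fun n hn => by
      obtain ⟨han, hnm⟩ := mem_Ico.1 hn
      have hn : n ∈ Set.Icc a m := ⟨han, hnm.le⟩
      have hn_succ : n + 1 ∈ Set.Icc a m := ⟨by omega, hnm⟩
      exact norm_sub_inv_one_sub_fourierChar (hg₀₁ n hn) (hg₀₁ _ hn_succ)
        (hmono hn hn_succ n.le_succ)
    _ = (cot (π * g a) - cot (π * g m)) / 2 := by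
      rw [← sum_div, ← neg_sub (cot (π * g m)), ← sum_Ico_sub (fun n => cot (π * g n)) ham,
        ← sum_neg_distrib]
      simp only [neg_sub]
    _ ≤ 1 / (2 * Δ) := by
      have ha := (le_abs_self _).trans (abs_cot_pi_mul_le hΔ (hmem a ⟨le_rfl, ham⟩))
      have hm := (neg_le_abs _).trans (abs_cot_pi_mul_le hΔ (hmem m ⟨ham, le_rfl⟩))
      linarith

/-- Kusmin–Landau inequality: with `w n = (1 - 𝐞 (f (n + 1) - f n))⁻¹`, each term equals
`(𝐞 (f n) - 𝐞 (f (n + 1))) * w n`, and `w` has bounded variation because its real part is constant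
and its imaginary part is monotone. -/
theorem norm_sum_fourierChar_le_of_monotoneOn_sub {f : ℕ → ℝ} {a b : ℕ} {k : ℤ} {Δ : ℝ}
    (hΔ : 0 < Δ) (hmono : MonotoneOn (fun n => f (n + 1) - f n) (Set.Ico a b))
    (hmem : ∀ n ∈ Set.Ico a b, f (n + 1) - f n ∈ Set.Icc (k + Δ) (k + 1 - Δ)) :
    ‖∑ n ∈ Ico a b, (𝐞 (f n) : ℂ)‖ ≤ 1 / Δ := by
  rcases le_or_gt b a with hab | hab
  · rw [Ico_eq_empty hab.not_gt, sum_empty, norm_zero]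
    positivity
  obtain ⟨m, rfl⟩ : ∃ m, b = m + 1 := ⟨b - 1, by omega⟩
  have ham : a ≤ m := by omega
  set g : ℕ → ℝ := fun n => f (n + 1) - f n - k with hg
  set w : ℕ → ℂ := fun n => (1 - (𝐞 (g n) : ℂ))⁻¹
  have hg_mono : MonotoneOn g (Set.Icc a m) := fun i hi j hj hij =>
    sub_le_sub_right (hmono ⟨hi.1, Nat.lt_succ_of_le hi.2⟩ ⟨hj.1, Nat.lt_succ_of_le hj.2⟩ hij) _
  have hg_mem : ∀ n ∈ Set.Icc a m, g n ∈ Set.Icc Δ (1 - Δ) := fun n hn => by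
    have := hmem n ⟨hn.1, Nat.lt_succ_of_le hn.2⟩
    exact ⟨by linarith [this.1], by linarith [this.2]⟩
  have h_summand : ∀ n ∈ Set.Icc a m, (𝐞 (f n) : ℂ) = (𝐞 (f n) - 𝐞 (f (n + 1))) * w n := by
    intro n hn
    have h_ne : 1 - (𝐞 (g n) : ℂ) ≠ 0 := by
      have := two_mul_le_sin_pi_mul hΔ.le (hg_mem n hn)
      rw [← norm_pos_iff, norm_one_sub_fourierChar]
      exact mul_pos two_pos (abs_pos.2 (by linarith))
    have h_succ : (𝐞 (f (n + 1)) : ℂ) = 𝐞 (f n) * 𝐞 (g n) := by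
      rw [hg, fourierChar_sub_intCast, ← Circle.coe_mul, ← AddChar.map_add_eq_mul,
        add_sub_cancel]
    rw [h_succ, ← mul_one_sub, mul_assoc, mul_inv_cancel₀ h_ne, mul_one]
  calc ‖∑ n ∈ Ico a (m + 1), (𝐞 (f n) : ℂ)‖
      ≤ ‖w a‖ + ‖w m‖ + ∑ n ∈ Ico a m, ‖w (n + 1) - w n‖ :=
        norm_sum_Ico_le_of_eq_sub_mul ham (fun n => (Circle.norm_coe _).le) h_summand
    _ ≤ 1 / (4 * Δ) + 1 / (4 * Δ) + 1 / (2 * Δ) := by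
        gcongr
        · exact norm_inv_one_sub_fourierChar_le hΔ (hg_mem a ⟨le_rfl, ham⟩)
        · exact norm_inv_one_sub_fourierChar_le hΔ (hg_mem m ⟨ham, le_rfl⟩)
        · exact sum_norm_sub_inv_one_sub_fourierChar_le hΔ ham hg_mono hg_mem
    _ = 1 / Δ := by field_simp; norm_num

end KusminLandau

section VanDerCorput

open Real FourierTransform

lemma exists_filter_Ico_mem_eq_Ico {α : Type*} [Preorder α] {g : ℕ → α} {a b : ℕ}
    (hg : MonotoneOn g (Set.Ico a b)) (S : Set α) [S.OrdConnected]
    [DecidablePred fun n => g n ∈ S] :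
    ∃ a' b', {n ∈ Ico a b | g n ∈ S} = Ico a' b' := by
  set s := {n ∈ Ico a b | g n ∈ S} with hs
  rcases s.eq_empty_or_nonempty with h | h
  · exact ⟨0, 0, by rw [h, Ico_self]⟩
  refine ⟨s.min' h, s.max' h + 1, Finset.ext fun n => ?_⟩
  rw [mem_Ico, Nat.lt_succ_iff]
  refine ⟨fun hn => ⟨s.min'_le n hn, s.le_max' n hn⟩, fun hn => ?_⟩
  obtain ⟨h_min, h_min_mem⟩ := mem_filter.1 (s.min'_mem h)
  obtain ⟨h_max, h_max_mem⟩ := mem_filter.1 (s.max'_mem h)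
  have hn_mem : n ∈ Ico a b :=
    mem_Ico.2 ⟨(mem_Ico.1 h_min).1.trans hn.1, hn.2.trans_lt (mem_Ico.1 h_max).2⟩
  rw [← coe_Ico] at hg
  exact mem_filter.2 ⟨hn_mem, Set.OrdConnected.out ‹_› h_min_mem h_max_mem
    ⟨hg h_min hn_mem hn.1, hg hn_mem h_max hn.2⟩⟩

lemma card_le_of_mul_sub_le_sub {g : ℕ → ℝ} {s : Finset ℕ} {lam u v : ℝ} (hlam : 0 < lam)
    (huv : u ≤ v) (hg : ∀ m ∈ s, ∀ n ∈ s, m ≤ n → lam * (n - m) ≤ g n - g m)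
    (hmem : ∀ n ∈ s, g n ∈ Set.Icc u v) : (#s : ℝ) ≤ (v - u) / lam + 1 := by
  rcases s.eq_empty_or_nonempty with rfl | hs
  · have : 0 ≤ (v - u) / lam := div_nonneg (sub_nonneg.2 huv) hlam.le
    simp only [card_empty, Nat.cast_zero]
    linarith
  have h_card : (#s : ℝ) ≤ s.max' hs + 1 - s.min' hs := by
    have h_sub : s ⊆ Icc (s.min' hs) (s.max' hs) := fun n hn =>
      mem_Icc.2 ⟨s.min'_le n hn, s.le_max' n hn⟩
    have h_le := (card_le_card h_sub).trans_eq (Nat.card_Icc _ _)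
    rw [← Nat.cast_add_one, ← Nat.cast_sub ((s.min'_le_max' hs).trans (Nat.le_succ _))]
    exact_mod_cast h_le
  have h_width : (s.max' hs : ℝ) - s.min' hs ≤ (v - u) / lam := by
    rw [le_div_iff₀ hlam, mul_comm]
    linarith [hg _ (s.min'_mem hs) _ (s.max'_mem hs) (s.min'_le_max' hs),
      (hmem _ (s.min'_mem hs)).1, (hmem _ (s.max'_mem hs)).2]
  linarith

lemma sub_mem_Icc_of_forall_succ_sub_mem_Icc {g : ℕ → ℝ} {a b m n : ℕ} {u v : ℝ}
    (hg : ∀ i ∈ Set.Ico a b, g (i + 1) - g i ∈ Set.Icc u v) (ham : a ≤ m) (hmn : m ≤ n)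
    (hnb : n ≤ b) : g n - g m ∈ Set.Icc (u * (n - m)) (v * (n - m)) := by
  induction n, hmn using Nat.le_induction with
  | base => simp
  | succ n hmn ih =>
    have h_ih := ih (by omega)
    have h_succ := hg n ⟨by omega, by omega⟩
    push_cast
    constructor <;> linarith [h_ih.1, h_ih.2, h_succ.1, h_succ.2]

lemma norm_sum_fourierChar_le_card {ι : Type*} (s : Finset ι) (f : ι → ℝ) :
    ‖∑ i ∈ s, (𝐞 (f i) : ℂ)‖ ≤ #s :=
  (norm_sum_le _ _).trans_eq (by simp only [Circle.norm_coe, sum_const, nsmul_eq_mul, mul_one])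

lemma norm_sum_fourierChar_filter_Icc_le {f : ℕ → ℝ} {a b : ℕ} {Δ : ℝ} (k : ℤ) (hΔ : 0 < Δ)
    (hmono : MonotoneOn (fun n => f (n + 1) - f n) (Set.Ico a b)) :
    ‖∑ n ∈ Ico a b with f (n + 1) - f n ∈ Set.Icc (k + Δ) (k + 1 - Δ), (𝐞 (f n) : ℂ)‖
      ≤ 1 / Δ := by
  obtain ⟨a', b', h_eq⟩ := exists_filter_Ico_mem_eq_Ico hmono (Set.Icc (k + Δ) (k + 1 - Δ))
  have h_mem : ∀ n ∈ Set.Ico a' b',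
      n ∈ Set.Ico a b ∧ f (n + 1) - f n ∈ Set.Icc (k + Δ) (k + 1 - Δ) := fun n hn => by
    have := h_eq ▸ mem_Ico.2 hn
    rwa [mem_filter, mem_Ico] at this
  rw [h_eq]
  exact norm_sum_fourierChar_le_of_monotoneOn_sub hΔ
    (hmono.mono fun n hn => (h_mem n hn).1) fun n hn => (h_mem n hn).2

lemma norm_sum_fourierChar_fiber_floor_le {f : ℕ → ℝ} {a b : ℕ} {lam r : ℝ} (k : ℤ)
    (hlam : 0 < lam) (hr : 0 < r)
    (hg : ∀ m ∈ Set.Ico a b, ∀ n ∈ Set.Ico a b, m ≤ n →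
      lam * (n - m) ≤ (f (n + 1) - f n) - (f (m + 1) - f m)) :
    ‖∑ n ∈ Ico a b with ⌊f (n + 1) - f n⌋ = k, (𝐞 (f n) : ℂ)‖ ≤ 2 * (r / lam + 1) + 1 / r := by
  set g : ℕ → ℝ := fun n => f (n + 1) - f n
  set middle := {n ∈ Ico a b | g n ∈ Set.Icc (k + r) (k + 1 - r)}
  have h_mono : MonotoneOn g (Set.Ico a b) := fun m hm n hn hmn => by
    have h_sub : (0 : ℝ) ≤ n - m := sub_nonneg.2 (Nat.cast_le.2 hmn)
    linarith [hg m hm n hn hmn, mul_nonneg hlam.le h_sub]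
  have h_interval (u : ℝ) : (#{n ∈ Ico a b | g n ∈ Set.Icc u (u + r)} : ℝ) ≤ r / lam + 1 := by
    have := card_le_of_mul_sub_le_sub (g := g) (s := {n ∈ Ico a b | g n ∈ Set.Icc u (u + r)}) hlam
      (by linarith : u ≤ u + r) (fun m hm n hn => hg m (mem_Ico.1 (mem_filter.1 hm).1) n
        (mem_Ico.1 (mem_filter.1 hn).1)) fun n hn => (mem_filter.1 hn).2
    rwa [add_sub_cancel_left] at this
  set fiber := {n ∈ Ico a b | ⌊g n⌋ = k}
  have h_edges : fiber \ middle ⊆ {n ∈ Ico a b | g n ∈ Set.Icc (k : ℝ) (k + r)} ∪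
      {n ∈ Ico a b | g n ∈ Set.Icc (k + 1 - r) (k + 1 - r + r)} := fun n hn => by
    simp only [fiber, middle, Finset.mem_sdiff, mem_union, mem_filter, Int.floor_eq_iff,
      Set.mem_Icc, not_and, not_le] at hn ⊢
    obtain ⟨⟨h_mem, h_lower, h_upper⟩, h_not⟩ := hn
    rcases le_or_gt (g n) (k + r) with h | h
    · exact Or.inl ⟨h_mem, h_lower, h⟩
    · exact Or.inr ⟨h_mem, (h_not h_mem h.le).le, by linarith⟩
  have h_card_edges : (#(fiber \ middle) : ℝ) ≤ 2 * (r / lam + 1) := by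
    have h_le : (#(fiber \ middle) : ℝ) ≤ #{n ∈ Ico a b | g n ∈ Set.Icc (k : ℝ) (k + r)} +
        #{n ∈ Ico a b | g n ∈ Set.Icc (k + 1 - r) (k + 1 - r + r)} := by
      rw [← Nat.cast_add, Nat.cast_le]
      exact (card_le_card h_edges).trans (card_union_le _ _)
    linarith [h_interval k, h_interval (k + 1 - r)]
  have h_middle_sub : middle ⊆ fiber := fun n hn => by
    simp only [fiber, middle, mem_filter, Int.floor_eq_iff, Set.mem_Icc] at hn ⊢
    exact ⟨hn.1, by linarith, by linarith⟩
  rw [← sum_sdiff h_middle_sub]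
  exact (norm_add_le _ _).trans (add_le_add ((norm_sum_fourierChar_le_card _ _).trans h_card_edges)
    (norm_sum_fourierChar_filter_Icc_le k hr h_mono))

lemma card_Icc_floor_le {u v : ℝ} (huv : u ≤ v) : (#(Icc ⌊u⌋ ⌊v⌋) : ℝ) ≤ v - u + 2 := by
  have h_card : (#(Icc ⌊u⌋ ⌊v⌋) : ℝ) = ⌊v⌋ + 1 - ⌊u⌋ := by
    exact_mod_cast Int.card_Icc_of_le ⌊u⌋ ⌊v⌋ ((Int.floor_mono huv).trans (Int.le_add_one le_rfl))
  rw [h_card]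
  linarith [Int.floor_le v, Int.lt_floor_add_one u]

lemma norm_sum_fourierChar_le_of_sub_mem_Icc {f : ℕ → ℝ} {a b : ℕ} {lam v : ℝ} (hlam : 0 < lam)
    (hlam_one : lam ≤ 1) (hab : a ≤ b)
    (hf : ∀ m n, a ≤ m → m ≤ n → n ≤ b →
      (f (n + 1) - f n) - (f (m + 1) - f m) ∈ Set.Icc (lam * (n - m)) (v * (n - m))) :
    ‖∑ n ∈ Ico a b, (𝐞 (f n) : ℂ)‖ ≤ (#(Ico a b) * v + 2) * (5 / √lam) := by
  set g : ℕ → ℝ := fun n => f (n + 1) - f n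
  have h_sqrt : 0 < √lam := sqrt_pos.2 hlam
  have hg_mono {m n : ℕ} (ham : a ≤ m) (hmn : m ≤ n) (hnb : n ≤ b) : g m ≤ g n := by
    have h_nonneg : (0 : ℝ) ≤ n - m := sub_nonneg.2 (Nat.cast_le.2 hmn)
    linarith [(hf m n ham hmn hnb).1, mul_nonneg hlam.le h_nonneg]
  have h_fiber (k : ℤ) : ‖∑ n ∈ Ico a b with ⌊g n⌋ = k, (𝐞 (f n) : ℂ)‖ ≤ 5 / √lam := calc
    _ ≤ 2 * (√lam / lam + 1) + 1 / √lam :=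
      norm_sum_fourierChar_fiber_floor_le k hlam h_sqrt fun m hm n hn hmn =>
        (hf m n hm.1 hmn hn.2.le).1
    _ = 3 * (1 / √lam) + 2 * 1 := by rw [sqrt_div_self']; ring
    _ ≤ 3 * (1 / √lam) + 2 * (1 / √lam) := by
      gcongr
      exact one_le_one_div h_sqrt (sqrt_le_one.2 hlam_one)
    _ = 5 / √lam := by ring
  have h_maps : ∀ n ∈ Ico a b, ⌊g n⌋ ∈ Icc ⌊g a⌋ ⌊g b⌋ := fun n hn => by
    obtain ⟨han, hnb⟩ := mem_Ico.1 hn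
    exact mem_Icc.2 ⟨Int.floor_mono (hg_mono le_rfl han hnb.le),
      Int.floor_mono (hg_mono han hnb.le le_rfl)⟩
  have h_card : (#(Icc ⌊g a⌋ ⌊g b⌋) : ℝ) ≤ #(Ico a b) * v + 2 := by
    have := (hf a b le_rfl hab le_rfl).2
    rw [Nat.card_Ico, Nat.cast_sub hab]
    linarith [card_Icc_floor_le (hg_mono le_rfl hab le_rfl)]
  calc ‖∑ n ∈ Ico a b, (𝐞 (f n) : ℂ)‖
      = ‖∑ k ∈ Icc ⌊g a⌋ ⌊g b⌋, ∑ n ∈ Ico a b with ⌊g n⌋ = k, (𝐞 (f n) : ℂ)‖ := by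
        rw [sum_fiberwise_of_maps_to h_maps]
    _ ≤ #(Icc ⌊g a⌋ ⌊g b⌋) * (5 / √lam) := by
        refine (norm_sum_le_of_le _ fun k _ => h_fiber k).trans_eq ?_
        rw [sum_const, nsmul_eq_mul]
    _ ≤ (#(Ico a b) * v + 2) * (5 / √lam) := by gcongr

/-- Van der Corput's second derivative test, with second differences in place of `f''`. -/
theorem norm_sum_fourierChar_le_of_second_difference {f : ℕ → ℝ} {a b : ℕ} {lam A : ℝ}
    (hlam : 0 < lam)
    (hf : ∀ n ∈ Set.Ico a b, f (n + 2) - 2 * f (n + 1) + f n ∈ Set.Icc lam (A * lam)) :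
    ‖∑ n ∈ Ico a b, (𝐞 (f n) : ℂ)‖ ≤ 10 * (#(Ico a b) * A * √lam + 1 / √lam) := by
  have h_sqrt : 0 < √lam := sqrt_pos.2 hlam
  rcases le_or_gt b a with hab | hab
  · simp only [Ico_eq_empty hab.not_gt, sum_empty, norm_zero, card_empty, Nat.cast_zero, zero_mul,
      zero_add]
    positivity
  have hA : 1 ≤ A := by
    have := hf a ⟨le_rfl, hab⟩
    exact le_of_mul_le_mul_right (by linarith [this.1, this.2]) hlam
  rcases le_total 1 lam with h_one | h_one
  · have h_le : (#(Ico a b) : ℝ) ≤ #(Ico a b) * (A * √lam) := le_mul_of_one_le_right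
      (Nat.cast_nonneg _) (one_le_mul_of_one_le_of_one_le hA (one_le_sqrt.2 h_one))
    have : 0 < 1 / √lam := by positivity
    linarith [norm_sum_fourierChar_le_card (Ico a b) f, Nat.cast_nonneg (α := ℝ) #(Ico a b)]
  have h_sub (m n : ℕ) : a ≤ m → m ≤ n → n ≤ b →
      (f (n + 1) - f n) - (f (m + 1) - f m) ∈ Set.Icc (lam * (n - m)) (A * lam * (n - m)) :=
    sub_mem_Icc_of_forall_succ_sub_mem_Icc (g := fun n => f (n + 1) - f n) fun n hn => by
      convert hf n hn using 1
      ring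
  calc ‖∑ n ∈ Ico a b, (𝐞 (f n) : ℂ)‖ ≤ (#(Ico a b) * (A * lam) + 2) * (5 / √lam) :=
        norm_sum_fourierChar_le_of_sub_mem_Icc hlam h_one hab.le h_sub
    _ = 5 * (#(Ico a b) * A * √lam) + 10 * (1 / √lam) := by
        field_simp
        rw [sq_sqrt hlam.le]
        ring
    _ ≤ 10 * (#(Ico a b) * A * √lam + 1 / √lam) := by
        have : 0 ≤ #(Ico a b) * A * √lam := by positivity
        linarith

end VanDerCorput

section Equidistribution

open Real FourierTransform

variable {ι : Type*}

/-- The weighted total `∑ h⁻² |∑ᵢ 𝐞 (h * y i)|` of the exponential sums of a finite family of points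
`y i`, which controls how far these points are from being equidistributed modulo one. The index
`h = 0` contributes nothing, because `x / 0 = 0`. -/
noncomputable def weylTotal (s : Finset ι) (y : ι → ℝ) : ℝ :=
  ∑' h : ℕ, ‖∑ i ∈ s, (𝐞 (h * y i) : ℂ)‖ / (h : ℝ) ^ 2

lemma summable_weylTotal (s : Finset ι) (y : ι → ℝ) :
    Summable fun h : ℕ => ‖∑ i ∈ s, (𝐞 (h * y i) : ℂ)‖ / (h : ℝ) ^ 2 := by
  refine .of_nonneg_of_le (fun h => by positivity) (fun h => ?_)
    ((summable_one_div_nat_pow.2 one_lt_two).mul_left (#s : ℝ))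
  rw [mul_one_div]
  gcongr
  exact norm_sum_fourierChar_le_card s _

lemma norm_sum_fourierChar_mul_sub_const (s : Finset ι) (y : ι → ℝ) (h β : ℝ) :
    ‖∑ i ∈ s, (𝐞 (h * (y i - β)) : ℂ)‖ = ‖∑ i ∈ s, (𝐞 (h * y i) : ℂ)‖ := by
  have h_factor : ∑ i ∈ s, (𝐞 (h * (y i - β)) : ℂ) = 𝐞 (-(h * β)) * ∑ i ∈ s, (𝐞 (h * y i) : ℂ) := by
    rw [mul_sum]
    refine sum_congr rfl fun i _ => ?_
    rw [← Circle.coe_mul, ← AddChar.map_add_eq_mul]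
    ring_nf
  rw [h_factor, norm_mul, Circle.norm_coe, one_mul]

lemma weylTotal_sub_const (s : Finset ι) (y : ι → ℝ) (β : ℝ) :
    weylTotal s (fun i => y i - β) = weylTotal s y := by
  simp only [weylTotal, norm_sum_fourierChar_mul_sub_const]

lemma hasSum_re_fourierChar_div_sq (z : ℝ) :
    HasSum (fun h : ℕ => (𝐞 (h * z) : ℂ).re / (h : ℝ) ^ 2)
      (π ^ 2 * bernoulliFun 2 (Int.fract z)) := by
  have h_sum := hasSum_one_div_nat_pow_mul_cos one_ne_zero
    ⟨Int.fract_nonneg z, (Int.fract_lt_one z).le⟩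
  have h_cos (h : ℕ) : cos (2 * π * h * Int.fract z) = cos (2 * π * (h * z)) := by
    rw [← cos_sub_int_mul_two_pi (2 * π * (h * z)) (h * ⌊z⌋), ← Int.self_sub_floor]
    push_cast
    ring_nf
  convert h_sum using 1
  · funext h
    rw [re_fourierChar, h_cos, mul_one, one_div_mul_eq_div]
  · simp only [bernoulliFun, mul_one, Nat.factorial]
    push_cast
    ring

lemma abs_sum_bernoulliFun_two_fract_le (s : Finset ι) (y : ι → ℝ) :
    |∑ i ∈ s, bernoulliFun 2 (Int.fract (y i))| ≤ weylTotal s y := by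
  have h_sum := hasSum_sum (s := s) fun i _ => hasSum_re_fourierChar_div_sq (y i)
  have h_bound (h : ℕ) : ‖∑ i ∈ s, (𝐞 (h * y i) : ℂ).re / (h : ℝ) ^ 2‖ ≤
      ‖∑ i ∈ s, (𝐞 (h * y i) : ℂ)‖ / (h : ℝ) ^ 2 := by
    rw [← sum_div, ← Complex.re_sum, norm_div, norm_pow, norm_natCast]
    gcongr
    exact Complex.abs_re_le_norm _
  have h_le := tsum_of_norm_bounded (summable_weylTotal s y).hasSum h_bound
  rw [h_sum.tsum_eq, ← mul_sum, norm_mul, norm_pow, norm_of_nonneg pi_pos.le, norm_eq_abs] at h_le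
  exact (le_mul_of_one_le_left (abs_nonneg _) (one_le_pow₀ (by linarith [pi_gt_three]))).trans h_le

lemma fract_sub_eq_ite {z θ : ℝ} (hθ : θ ∈ Set.Ioc 0 1) :
    Int.fract (z - θ) = Int.fract z - θ + if Int.fract z < θ then 1 else 0 := by
  have h_floor := Int.floor_add_fract z
  have h_nonneg := Int.fract_nonneg z
  have h_lt_one := Int.fract_lt_one z
  obtain ⟨hθ₀, hθ₁⟩ := hθ
  split_ifs with h
  · refine Int.fract_eq_iff.2 ⟨by linarith, by linarith, ⌊z⌋ - 1, ?_⟩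
    push_cast
    linarith
  · exact Int.fract_eq_iff.2 ⟨by linarith, by linarith, ⌊z⌋, by linarith⟩

/- The secant slopes of the second Bernoulli function over `[z - Δ, z]` approximate its derivative,
the sawtooth `2 ({z} - 1 / 2)`, with an error that stays small across the jump. -/
lemma bernoulliFun_two_fract_sub_mem_Icc (z : ℝ) {Δ : ℝ} (hΔ : Δ ∈ Set.Ioc 0 1) :
    bernoulliFun 2 (Int.fract z) - bernoulliFun 2 (Int.fract (z - Δ)) ∈
      Set.Icc (2 * Δ * (Int.fract z - 1 / 2) - Δ ^ 2)
        (2 * Δ * (Int.fract (z - Δ) - 1 / 2) + Δ ^ 2) := by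
  have h_nonneg := Int.fract_nonneg z
  rw [bernoulliFun_two, bernoulliFun_two, fract_sub_eq_ite hΔ]
  obtain ⟨hΔ₀, hΔ₁⟩ := hΔ
  split_ifs with h <;> constructor <;> nlinarith

lemma abs_sum_fract_sub_half_le (s : Finset ι) (y : ι → ℝ) {Δ : ℝ} (hΔ : Δ ∈ Set.Ioc 0 1) :
    |∑ i ∈ s, (Int.fract (y i) - 1 / 2)| ≤ #s * Δ / 2 + weylTotal s y / Δ := by
  set B : ℝ → ℝ := fun β => ∑ i ∈ s, bernoulliFun 2 (Int.fract (y i - β))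
  have hB (β : ℝ) : |B β| ≤ weylTotal s y :=
    (abs_sum_bernoulliFun_two_fract_le s _).trans_eq (weylTotal_sub_const s y β)
  have hB_zero : B 0 = ∑ i ∈ s, bernoulliFun 2 (Int.fract (y i)) := by simp only [B, sub_zero]
  have h_upper : 2 * Δ * ∑ i ∈ s, (Int.fract (y i) - 1 / 2) - #s * Δ ^ 2 ≤ B 0 - B Δ := by
    rw [hB_zero, ← sum_sub_distrib, mul_sum, ← nsmul_eq_mul, ← sum_const, ← sum_sub_distrib]
    exact sum_le_sum fun i _ => (bernoulliFun_two_fract_sub_mem_Icc (y i) hΔ).1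
  have h_lower : B (-Δ) - B 0 ≤ 2 * Δ * ∑ i ∈ s, (Int.fract (y i) - 1 / 2) + #s * Δ ^ 2 := by
    rw [hB_zero, ← sum_sub_distrib, mul_sum, ← nsmul_eq_mul, ← sum_const, ← sum_add_distrib]
    refine sum_le_sum fun i _ => ?_
    have := (bernoulliFun_two_fract_sub_mem_Icc (y i - -Δ) hΔ).2
    rwa [show y i - -Δ - Δ = y i by ring] at this
  obtain ⟨h₀, h₀'⟩ := abs_le.1 (hB 0)
  obtain ⟨hΔ', -⟩ := abs_le.1 (hB Δ)
  obtain ⟨h_neg, -⟩ := abs_le.1 (hB (-Δ))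
  have h_scale : #s * Δ / 2 + weylTotal s y / Δ =
      (#s * Δ ^ 2 + 2 * weylTotal s y) / (2 * Δ) := by
    have := hΔ.1.ne'
    field_simp
  have hΔ₂ : 0 < 2 * Δ := mul_pos two_pos hΔ.1
  rw [h_scale, abs_le, ← neg_div, div_le_iff₀ hΔ₂, le_div_iff₀ hΔ₂]
  constructor <;> linarith

theorem abs_card_filter_fract_lt_sub_le (s : Finset ι) (y : ι → ℝ) {θ Δ : ℝ}
    (hθ : θ ∈ Set.Ioc 0 1) (hΔ : Δ ∈ Set.Ioc 0 1) :
    |(#{i ∈ s | Int.fract (y i) < θ} : ℝ) - θ * #s| ≤ #s * Δ + 2 * weylTotal s y / Δ := by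
  have h_card : (#{i ∈ s | Int.fract (y i) < θ} : ℝ) - θ * #s =
      ∑ i ∈ s, (Int.fract (y i - θ) - 1 / 2) - ∑ i ∈ s, (Int.fract (y i) - 1 / 2) := by
    simp only [fract_sub_eq_ite hθ, sum_sub_distrib, sum_add_distrib, sum_boole, sum_const,
      nsmul_eq_mul]
    ring
  have h₁ := abs_sum_fract_sub_half_le s (fun i => y i - θ) hΔ
  have h₂ := abs_sum_fract_sub_half_le s y hΔ
  rw [weylTotal_sub_const] at h₁
  rw [h_card]
  refine (abs_sub _ _).trans ((add_le_add h₁ h₂).trans_eq ?_)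
  ring

lemma summable_sqrt_div_sq : Summable fun h : ℕ => √h / (h : ℝ) ^ 2 := by
  refine (summable_nat_rpow_inv.2 (by norm_num : (1 : ℝ) < 3 / 2)).congr fun h => ?_
  rcases h.eq_zero_or_pos with rfl | h_pos
  · simp
  have h_pos : (0 : ℝ) < h := Nat.cast_pos.2 h_pos
  rw [sqrt_eq_rpow, ← rpow_natCast, ← rpow_sub h_pos, ← rpow_neg h_pos.le]
  norm_num

lemma weylTotal_le_of_norm_le_mul_sqrt {s : Finset ι} {y : ι → ℝ} {R : ℝ}
    (hR : ∀ h : ℕ, 1 ≤ h → ‖∑ i ∈ s, (𝐞 (h * y i) : ℂ)‖ ≤ R * √h) :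
    weylTotal s y ≤ R * ∑' h : ℕ, √h / (h : ℝ) ^ 2 := by
  rw [← tsum_mul_left]
  refine (summable_weylTotal s y).tsum_le_tsum (fun h => ?_) (summable_sqrt_div_sq.mul_left R)
  rcases h.eq_zero_or_pos with rfl | h_pos
  · simp
  rw [← mul_div_assoc]
  gcongr
  exact hR h h_pos

end Equidistribution

section Fejer

open Real FourierTransform

lemma sum_range_natAbs_sub_le {F : ℕ → ℝ} (hF : ∀ j, 0 ≤ F j) {h H : ℕ} (hh : h < H) :
    ∑ k ∈ range H, F ((h : ℤ) - k).natAbs ≤ F 0 + 2 * ∑ j ∈ Ico 1 H, F j := by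
  have h_left : ∑ k ∈ range (h + 1), F ((h : ℤ) - k).natAbs ≤ F 0 + ∑ j ∈ Ico 1 H, F j := calc
    _ = ∑ k ∈ range (h + 1), F (h - k) := sum_congr rfl fun k hk => by
      have := mem_range.1 hk
      congr 1
      omega
    _ = ∑ j ∈ range (h + 1), F j := sum_range_reflect F (h + 1)
    _ ≤ ∑ j ∈ range H, F j :=
      sum_le_sum_of_subset_of_nonneg (range_mono hh) fun j _ _ => hF j
    _ = F 0 + ∑ j ∈ Ico 1 H, F j := by
      rw [range_eq_Ico, sum_eq_sum_Ico_succ_bot (by omega)]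
  have h_right : ∑ k ∈ Ico (h + 1) H, F ((h : ℤ) - k).natAbs ≤ ∑ j ∈ Ico 1 H, F j := calc
    _ = ∑ j ∈ Ico 1 (H - h), F j := by
      rw [sum_Ico_eq_sum_range, sum_Ico_eq_sum_range, Nat.sub_add_eq H h 1]
      exact sum_congr rfl fun k _ => by congr 1; omega
    _ ≤ ∑ j ∈ Ico 1 H, F j :=
      sum_le_sum_of_subset_of_nonneg (Ico_subset_Ico_right (Nat.sub_le H h)) fun j _ _ => hF j
  rw [← sum_range_add_sum_Ico _ (Nat.succ_le_of_lt hh)]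
  linarith

variable {ι : Type*}

lemma norm_sum_fourierChar_natAbs_mul (s : Finset ι) (y : ι → ℝ) (m : ℤ) :
    ‖∑ i ∈ s, (𝐞 (m.natAbs * y i) : ℂ)‖ = ‖∑ i ∈ s, (𝐞 (m * y i) : ℂ)‖ := by
  rcases Int.natAbs_eq m with h | h
  · rw [h]
    simp only [Int.natAbs_natCast, Int.cast_natCast]
  · rw [h, ← RCLike.norm_conj, map_sum]
    simp only [Int.natAbs_neg, Int.natAbs_natCast, Int.cast_neg, Int.cast_natCast, neg_mul,
      AddChar.map_neg_eq_inv, Circle.coe_inv_eq_conj]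

lemma norm_sq_sum_fourierChar_mul (t : Finset ℕ) (z : ℝ) :
    ((‖∑ h ∈ t, (𝐞 (h * z) : ℂ)‖ ^ 2 : ℝ) : ℂ) =
      ∑ h ∈ t, ∑ k ∈ t, (𝐞 (((h - k : ℤ) : ℝ) * z) : ℂ) := by
  rw [← Complex.normSq_eq_norm_sq, Complex.normSq_eq_conj_mul_self, mul_comm, map_sum, sum_mul_sum]
  refine sum_congr rfl fun h _ => sum_congr rfl fun k _ => ?_
  rw [← Circle.coe_inv_eq_conj, ← AddChar.map_neg_eq_inv, ← Circle.coe_mul,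
    ← AddChar.map_add_eq_mul]
  push_cast
  ring_nf

lemma sum_norm_sq_sum_fourierChar_le (s : Finset ι) (y : ι → ℝ) (H : ℕ) :
    ∑ i ∈ s, ‖∑ h ∈ range H, (𝐞 (h * y i) : ℂ)‖ ^ 2 ≤
      H * (#s + 2 * ∑ h ∈ Ico 1 H, ‖∑ i ∈ s, (𝐞 (h * y i) : ℂ)‖) := by
  set S : ℕ → ℝ := fun h => ‖∑ i ∈ s, (𝐞 (h * y i) : ℂ)‖
  have h_swap : ((∑ i ∈ s, ‖∑ h ∈ range H, (𝐞 (h * y i) : ℂ)‖ ^ 2 : ℝ) : ℂ) =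
      ∑ h ∈ range H, ∑ k ∈ range H, ∑ i ∈ s, (𝐞 (((h - k : ℤ) : ℝ) * y i) : ℂ) := by
    simp only [Complex.ofReal_sum, norm_sq_sum_fourierChar_mul]
    rw [sum_comm]
    exact sum_congr rfl fun h _ => sum_comm
  calc ∑ i ∈ s, ‖∑ h ∈ range H, (𝐞 (h * y i) : ℂ)‖ ^ 2
      = ‖∑ h ∈ range H, ∑ k ∈ range H, ∑ i ∈ s, (𝐞 (((h - k : ℤ) : ℝ) * y i) : ℂ)‖ := by
        rw [← h_swap, Complex.norm_real, norm_of_nonneg (sum_nonneg fun i _ => by positivity)]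
    _ ≤ ∑ h ∈ range H, ∑ k ∈ range H, S ((h : ℤ) - k).natAbs := by
        refine norm_sum_le_of_le _ fun h _ => norm_sum_le_of_le _ fun k _ => ?_
        rw [← norm_sum_fourierChar_natAbs_mul]
    _ ≤ ∑ h ∈ range H, (S 0 + 2 * ∑ j ∈ Ico 1 H, S j) :=
        sum_le_sum fun h hh =>
          sum_range_natAbs_sub_le (F := S) (fun j => norm_nonneg _) (mem_range.1 hh)
    _ = H * (S 0 + 2 * ∑ j ∈ Ico 1 H, S j) := by rw [sum_const, card_range, nsmul_eq_mul]
    _ ≤ H * (#s + 2 * ∑ h ∈ Ico 1 H, S h) := by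
        gcongr
        exact norm_sum_fourierChar_le_card s _

lemma half_le_norm_sum_range_fourierChar {H : ℕ} {z : ℝ} (hz : Int.fract z ≤ 1 / (6 * H)) :
    (H : ℝ) / 2 ≤ ‖∑ h ∈ range H, (𝐞 (h * z) : ℂ)‖ := by
  have h_nonneg := Int.fract_nonneg z
  have h_re : ∀ h ∈ range H, 1 / 2 ≤ (𝐞 (h * z) : ℂ).re := fun h hh => by
    have h_lt : (h : ℝ) < H := Nat.cast_lt.2 (mem_range.1 hh)
    have h_pos : (0 : ℝ) < H := (Nat.cast_nonneg h).trans_lt h_lt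
    have h_small : h * Int.fract z ≤ 1 / 6 := calc
      h * Int.fract z ≤ H * (1 / (6 * H)) := by gcongr
      _ = 1 / 6 := by field_simp
    have h_shift : h * z - (h * ⌊z⌋ : ℤ) = h * Int.fract z := by
      rw [← Int.self_sub_floor]
      push_cast
      ring
    rw [← fourierChar_sub_intCast _ (h * ⌊z⌋), h_shift, re_fourierChar, ← cos_pi_div_three]
    exact cos_le_cos_of_nonneg_of_le_pi (by positivity) (by linarith [pi_pos])
      (by nlinarith [pi_pos])
  calc (H : ℝ) / 2 = #(range H) • (1 / 2 : ℝ) := by rw [card_range, nsmul_eq_mul]; ring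
    _ ≤ ∑ h ∈ range H, (𝐞 (h * z) : ℂ).re := card_nsmul_le_sum _ _ _ h_re
    _ = (∑ h ∈ range H, (𝐞 (h * z) : ℂ)).re := (Complex.re_sum _ _).symm
    _ ≤ ‖∑ h ∈ range H, (𝐞 (h * z) : ℂ)‖ := Complex.re_le_norm _

theorem card_filter_fract_le_le (s : Finset ι) (y : ι → ℝ) {H : ℕ} (hH : 1 ≤ H) :
    (#{i ∈ s | Int.fract (y i) ≤ 1 / (6 * H)} : ℝ) ≤
      4 * #s / H + 8 / H * ∑ h ∈ Ico 1 H, ‖∑ i ∈ s, (𝐞 (h * y i) : ℂ)‖ := by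
  have hH_pos : (0 : ℝ) < H := Nat.cast_pos.2 hH
  have h_le : #{i ∈ s | Int.fract (y i) ≤ 1 / (6 * H)} * ((H : ℝ) / 2) ^ 2 ≤
      H * (#s + 2 * ∑ h ∈ Ico 1 H, ‖∑ i ∈ s, (𝐞 (h * y i) : ℂ)‖) := calc
    _ = #{i ∈ s | Int.fract (y i) ≤ 1 / (6 * H)} • ((H : ℝ) / 2) ^ 2 := (nsmul_eq_mul _ _).symm
    _ ≤ ∑ i ∈ s with Int.fract (y i) ≤ 1 / (6 * H), ‖∑ h ∈ range H, (𝐞 (h * y i) : ℂ)‖ ^ 2 := by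
      refine card_nsmul_le_sum _ _ _ fun i hi => ?_
      gcongr
      exact half_le_norm_sum_range_fourierChar (mem_filter.1 hi).2
    _ ≤ ∑ i ∈ s, ‖∑ h ∈ range H, (𝐞 (h * y i) : ℂ)‖ ^ 2 :=
      sum_le_sum_of_subset_of_nonneg (filter_subset _ _) fun i _ _ => by positivity
    _ ≤ _ := sum_norm_sq_sum_fourierChar_le s y H
  rw [← le_div_iff₀ (by positivity)] at h_le
  refine h_le.trans_eq ?_
  field_simp
  ring

end Fejer

section PowerPhase

open Real FourierTransform

lemma exists_second_difference_eq {f f' f'' : ℝ → ℝ} {t : ℝ}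
    (hf : ∀ u ∈ Set.Icc t (t + 2), HasDerivAt f (f' u) u)
    (hf' : ∀ u ∈ Set.Icc t (t + 2), HasDerivAt f' (f'' u) u) :
    ∃ η ∈ Set.Ioo t (t + 2), f (t + 2) - 2 * f (t + 1) + f t = f'' η := by
  have h_diff : ∀ u ∈ Set.Icc t (t + 1),
      HasDerivAt (fun u => f (u + 1) - f u) (f' (u + 1) - f' u) u := fun u hu =>
    ((hf (u + 1) ⟨by linarith [hu.1], by linarith [hu.2]⟩).comp_add_const u 1).sub
      (hf u ⟨hu.1, by linarith [hu.2]⟩)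
  obtain ⟨ξ, hξ, h_slope⟩ := exists_hasDerivAt_eq_slope _ _ (lt_add_one t)
    (fun u hu => (h_diff u hu).continuousAt.continuousWithinAt)
    fun u hu => h_diff u (Set.Ioo_subset_Icc_self hu)
  have h_sub : Set.Icc ξ (ξ + 1) ⊆ Set.Icc t (t + 2) :=
    Set.Icc_subset_Icc hξ.1.le (by linarith [hξ.2])
  obtain ⟨η, hη, h_slope'⟩ := exists_hasDerivAt_eq_slope f' f'' (lt_add_one ξ)
    (fun u hu => (hf' u (h_sub hu)).continuousAt.continuousWithinAt)
    fun u hu => hf' u (h_sub (Set.Ioo_subset_Icc_self hu))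
  refine ⟨η, ⟨hξ.1.trans hη.1, by linarith [hη.2, hξ.2]⟩, ?_⟩
  simp only [add_sub_cancel_left, div_one] at h_slope h_slope'
  rw [h_slope', h_slope, add_assoc, one_add_one_eq_two]
  ring

lemma exists_rpow_second_difference_eq (c : ℝ) {t : ℝ} (ht : 0 < t) :
    ∃ η ∈ Set.Ioo t (t + 2),
      (t + 2) ^ c - 2 * (t + 1) ^ c + t ^ c = c * (c - 1) * η ^ (c - 2) := by
  have h_ne : ∀ u ∈ Set.Icc t (t + 2), u ≠ 0 := fun u hu => (ht.trans_le hu.1).ne'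
  refine exists_second_difference_eq (f := fun u => u ^ c) (f' := fun u => c * u ^ (c - 1))
    (fun u hu => hasDerivAt_rpow_const (Or.inl (h_ne u hu))) fun u hu => ?_
  have h_deriv := (hasDerivAt_rpow_const (p := c - 1) (Or.inl (h_ne u hu))).const_mul c
  rwa [sub_sub, one_add_one_eq_two, ← mul_assoc] at h_deriv

variable {c x L : ℝ}

lemma rpow_second_difference_mem_Icc (hc1 : 1 < c) (hc2 : c < 2) {t : ℝ} (ht : 1 ≤ t)
    (htx : t ≤ x) (hxL : x ≤ L * t) :
    (t + 2) ^ c - 2 * (t + 1) ^ c + t ^ c ∈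
      Set.Icc (c * (c - 1) / 3 * x ^ (c - 2)) (3 * L * (c * (c - 1) / 3 * x ^ (c - 2))) := by
  have hx : 0 < x := by linarith
  have hL : 1 ≤ L := by
    by_contra! h
    nlinarith
  have hc : 0 < c * (c - 1) := mul_pos (by linarith) (by linarith)
  obtain ⟨η, ⟨htη, hηt⟩, h_eq⟩ := exists_rpow_second_difference_eq c (zero_lt_one.trans_le ht)
  have h_lower : 1 / 3 * x ^ (c - 2) ≤ η ^ (c - 2) := calc
    1 / 3 * x ^ (c - 2) = 3 ^ (-1 : ℝ) * x ^ (c - 2) := by rw [rpow_neg_one, one_div]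
    _ ≤ 3 ^ (c - 2) * x ^ (c - 2) := by
      gcongr
      · norm_num
      · linarith
    _ = (3 * x) ^ (c - 2) := (mul_rpow (by norm_num) hx.le).symm
    _ ≤ η ^ (c - 2) := rpow_le_rpow_of_nonpos (by linarith) (by linarith) (by linarith)
  have h_upper : η ^ (c - 2) ≤ L * x ^ (c - 2) := calc
    η ^ (c - 2) ≤ (x / L) ^ (c - 2) := by
      refine rpow_le_rpow_of_nonpos (by positivity) ?_ (by linarith)
      exact (div_le_of_le_mul₀ (by linarith) (by linarith) (by linarith)).trans htη.le
    _ = L ^ (2 - c) * x ^ (c - 2) := by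
      rw [div_rpow hx.le (by linarith), ← neg_sub 2 c, rpow_neg (zero_le_one.trans hL),
        div_inv_eq_mul, mul_comm]
    _ ≤ L ^ (1 : ℝ) * x ^ (c - 2) := by
      gcongr
      linarith
    _ = L * x ^ (c - 2) := by rw [rpow_one]
  rw [h_eq]
  constructor <;> nlinarith

/-- The constant in the bound `norm_sum_fourierChar_mul_rpow_le` for the exponential sum with
phase `α * n ^ c`. -/
noncomputable def rpowSumConst (c : ℝ) : ℝ :=
  10 * (3 * √(c * (c - 1) / 3) + 1 / √(c * (c - 1) / 3))

lemma rpowSumConst_nonneg (c : ℝ) : 0 ≤ rpowSumConst c := by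
  unfold rpowSumConst
  positivity

lemma card_Ico_le_of_cast_le {a b : ℕ} (ha : 1 ≤ a) (hx : 0 ≤ x) (hb : (b : ℝ) ≤ x + 1) :
    (#(Ico a b) : ℝ) ≤ x := by
  rcases le_total a b with hab | hab
  · have ha : (1 : ℝ) ≤ a := Nat.one_le_cast.2 ha
    rw [Nat.card_Ico, Nat.cast_sub hab]
    linarith
  · rwa [Ico_eq_empty_of_le hab, card_empty, Nat.cast_zero]

lemma mul_rpow_second_difference_mem_Icc (hc1 : 1 < c) (hc2 : c < 2) {a b : ℕ} (ha1 : 1 ≤ a)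
    (ha : x ≤ L * a) (hb : (b : ℝ) ≤ x + 1) {α : ℝ} (hα : 0 ≤ α) {n : ℕ} (hn : n ∈ Set.Ico a b) :
    α * ((n + 2 : ℕ) : ℝ) ^ c - 2 * (α * ((n + 1 : ℕ) : ℝ) ^ c) + α * (n : ℝ) ^ c ∈
      Set.Icc (α * (c * (c - 1) / 3 * x ^ (c - 2)))
        (3 * L * (α * (c * (c - 1) / 3 * x ^ (c - 2)))) := by
  have ha1 : (1 : ℝ) ≤ a := Nat.one_le_cast.2 ha1
  have h_an : (a : ℝ) ≤ n := Nat.cast_le.2 hn.1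
  have h_nb : (n : ℝ) + 1 ≤ b := mod_cast hn.2
  have hx : 0 ≤ x := by linarith
  have hL : 0 ≤ L := nonneg_of_mul_nonneg_left (hx.trans ha) (zero_lt_one.trans_le ha1)
  obtain ⟨h_lower, h_upper⟩ := rpow_second_difference_mem_Icc hc1 hc2 (L := L)
    (ha1.trans h_an) (by linarith : (n : ℝ) ≤ x) (ha.trans (by gcongr))
  push_cast
  constructor <;> nlinarith

theorem norm_sum_fourierChar_mul_rpow_le (hc1 : 1 < c) (hc2 : c < 2) (hx : 0 < x) {a b : ℕ}
    (ha : x ≤ L * a) (hb : (b : ℝ) ≤ x + 1) {α : ℝ} (hα : 0 < α) :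
    ‖∑ n ∈ Ico a b, (𝐞 (α * (n : ℝ) ^ c) : ℂ)‖ ≤
      rpowSumConst c * (L * x ^ (c / 2) * √α + x ^ (1 - c / 2) / √α) := by
  have ha1 : 1 ≤ a := Nat.one_le_iff_ne_zero.2 fun h => by
    rw [h, Nat.cast_zero, mul_zero] at ha
    exact hx.not_ge ha
  have hL : 0 < L := pos_of_mul_pos_left (hx.trans_le ha) (Nat.cast_nonneg a)
  have hc : 0 < c * (c - 1) / 3 := div_pos (mul_pos (by linarith) (by linarith)) (by norm_num)
  set k := √(c * (c - 1) / 3) with hk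
  have hk_pos : 0 < k := sqrt_pos.2 hc
  have hα_pos : 0 < √α := sqrt_pos.2 hα
  have h_sqrt : √(α * (c * (c - 1) / 3 * x ^ (c - 2))) = √α * k * x ^ (c / 2 - 1) := by
    rw [sqrt_mul hα.le, sqrt_mul hc.le, sqrt_eq_rpow (x ^ (c - 2)), ← rpow_mul hx.le, ← mul_assoc,
      mul_one_div, sub_div, div_self two_ne_zero]
  have h_card := card_Ico_le_of_cast_le ha1 hx.le hb
  refine (norm_sum_fourierChar_le_of_second_difference (by positivity) fun n hn =>
    mul_rpow_second_difference_mem_Icc hc1 hc2 ha1 ha hb hα.le hn).trans ?_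
  rw [h_sqrt, rpowSumConst, ← hk]
  have h_main : #(Ico a b) * (3 * L) * (√α * k * x ^ (c / 2 - 1)) ≤
      3 * k * (L * x ^ (c / 2) * √α) := calc
    _ ≤ x * (3 * L) * (√α * k * x ^ (c / 2 - 1)) := by gcongr
    _ = 3 * k * (L * (x * x ^ (c / 2 - 1)) * √α) := by ring
    _ = 3 * k * (L * x ^ (c / 2) * √α) := by
      rw [rpow_sub_one hx.ne', mul_div_cancel₀ _ hx.ne']
  have h_second : 1 / (√α * k * x ^ (c / 2 - 1)) = 1 / k * (x ^ (1 - c / 2) / √α) := by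
    rw [← neg_sub (c / 2), rpow_neg hx.le]
    field_simp
  have h_cross : 0 ≤ 1 / k * (L * x ^ (c / 2) * √α) := by positivity
  have h_cross' : 0 ≤ 3 * k * (x ^ (1 - c / 2) / √α) := by positivity
  rw [h_second]
  linarith

end PowerPhase

lemma dvd_floor_iff_fract_div_lt {z : ℝ} (hz : 0 ≤ z) {q : ℕ} (hq : 1 ≤ q) :
    q ∣ ⌊z⌋₊ ↔ Int.fract (z / q) < 1 / q := by
  have hq_pos : (0 : ℝ) < q := Nat.cast_pos.2 hq
  have h_fract : Int.fract (z / q) = (z - (q * (⌊z⌋₊ / q) : ℕ)) / q := by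
    rw [← Int.self_sub_floor, ← natCast_floor_eq_intCast_floor (by positivity),
      Nat.floor_div_natCast, sub_div, Nat.cast_mul, mul_div_cancel_left₀ _ hq_pos.ne']
  rw [h_fract, div_lt_div_iff_of_pos_right hq_pos, sub_lt_iff_lt_add', ← Nat.cast_add_one,
    ← Nat.floor_lt hz, Nat.lt_succ_iff]
  exact ⟨fun h => (Nat.mul_div_cancel' h).ge,
    fun h => ⟨⌊z⌋₊ / q, le_antisymm h (Nat.mul_div_le _ _)⟩⟩

lemma sum_Icc_one_div_sqrt_le (n : ℕ) : ∑ h ∈ Icc 1 n, 1 / √(h : ℝ) ≤ 2 * √(n : ℝ) := by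
  induction n with
  | zero => simp
  | succ n ih =>
    have h_pos : 0 < √((n + 1 : ℕ) : ℝ) := Real.sqrt_pos.2 (by positivity)
    have h_sq := Real.sq_sqrt (Nat.cast_nonneg (α := ℝ) n)
    have h_sq' := Real.sq_sqrt (Nat.cast_nonneg (α := ℝ) (n + 1))
    have h_step : 1 / √((n + 1 : ℕ) : ℝ) ≤ 2 * (√((n + 1 : ℕ) : ℝ) - √(n : ℝ)) := by
      rw [div_le_iff₀ h_pos]
      push_cast at *
      nlinarith [sq_nonneg (√(n + 1 : ℝ) - √(n : ℝ))]
    rw [sum_Icc_succ_top (by omega)]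
    linarith

lemma strictMono_floor_rpow {c : ℝ} (hc : 1 ≤ c) : StrictMono fun n : ℕ => ⌊(n : ℝ) ^ c⌋₊ :=
  strictMono_nat_of_lt_succ fun n => by
    have h_add : (n : ℝ) ^ c + 1 ≤ ((n + 1 : ℕ) : ℝ) ^ c := by
      simpa using Real.add_rpow_le_rpow_add (Nat.cast_nonneg n) zero_le_one hc
    rw [← Nat.succ_le_iff, Nat.succ_eq_add_one, ← Nat.floor_add_one (by positivity)]
    exact Nat.floor_le_floor h_add

section DvdCount

open Real FourierTransform

/-- The number of `n ∈ [a, b)` for which `q` divides `⌊n ^ c⌋`. -/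
noncomputable def dvdCount (c : ℝ) (a b q : ℕ) : ℕ :=
  #((Ico a b).filter fun n : ℕ => q ∣ ⌊(n : ℝ) ^ c⌋₊)

lemma dvdCount_eq_card_fract_lt (c : ℝ) (a b : ℕ) {q : ℕ} (hq : 1 ≤ q) :
    dvdCount c a b q = #((Ico a b).filter fun n : ℕ => Int.fract ((n : ℝ) ^ c / q) < 1 / q) := by
  unfold dvdCount
  congr 1
  exact filter_congr fun n _ => dvd_floor_iff_fract_div_lt (by positivity) hq

variable {c x L : ℝ} {a b q : ℕ}

lemma dvdCount_le_rpow_div (hc : 1 ≤ c) (ha : 1 ≤ a) (hx : 0 ≤ x) (hb : (b : ℝ) ≤ x + 1) :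
    (dvdCount c a b q : ℝ) ≤ x ^ c / q := by
  have h_mono := strictMono_floor_rpow hc
  have h_card : dvdCount c a b q ≤ #{m ∈ Ioc 0 ⌊x ^ c⌋₊ | q ∣ m} := by
    refine card_le_card_of_injOn _ (fun n hn => ?_) h_mono.injective.injOn
    simp only [coe_filter, mem_Ico, mem_Ioc, Set.mem_ofPred_eq] at hn ⊢
    have h_nb : (n : ℝ) + 1 ≤ b := mod_cast hn.1.2
    refine ⟨⟨(Nat.zero_le _).trans_lt (h_mono (ha.trans hn.1.1)), Nat.floor_le_floor ?_⟩, hn.2⟩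
    gcongr
    linarith
  rw [Nat.Ioc_filter_dvd_card_eq_div] at h_card
  calc (dvdCount c a b q : ℝ) ≤ (⌊x ^ c⌋₊ / q : ℕ) := Nat.cast_le.2 h_card
    _ ≤ (⌊x ^ c⌋₊ : ℝ) / q := Nat.cast_div_le
    _ ≤ x ^ c / q := by
      gcongr
      exact Nat.floor_le (by positivity)

lemma norm_sum_fourierChar_mul_rpow_div_le (hc1 : 1 < c) (hc2 : c < 2) (hx : 0 < x)
    (ha : x ≤ L * a) (hb : (b : ℝ) ≤ x + 1) (hq : 1 ≤ q) {h : ℕ} (hh : 1 ≤ h) :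
    ‖∑ n ∈ Ico a b, (𝐞 (h * ((n : ℝ) ^ c / q)) : ℂ)‖ ≤
      rpowSumConst c * (L * x ^ (c / 2) * (√h / √q) + x ^ (1 - c / 2) * (√q / √h)) := by
  have hh : (0 : ℝ) < h := Nat.cast_pos.2 hh
  have hq : (0 : ℝ) < q := Nat.cast_pos.2 hq
  have h_bound := norm_sum_fourierChar_mul_rpow_le hc1 hc2 hx ha hb (div_pos hh hq)
  rw [sqrt_div hh.le, ← mul_one_div (x ^ (1 - c / 2)), one_div_div] at h_bound
  simpa only [div_mul_eq_mul_div, mul_div_assoc] using h_bound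

lemma norm_sum_fourierChar_mul_rpow_div_le_mul_sqrt (hc1 : 1 < c) (hc2 : c < 2) (hx : 0 < x)
    (ha : x ≤ L * a) (hb : (b : ℝ) ≤ x + 1) (hq : 1 ≤ q) {h : ℕ} (hh : 1 ≤ h) :
    ‖∑ n ∈ Ico a b, (𝐞 (h * ((n : ℝ) ^ c / q)) : ℂ)‖ ≤
      rpowSumConst c * (L * x ^ (c / 2) + x ^ (1 - c / 2) * q) * √h := by
  have hL : 0 ≤ L := (pos_of_mul_pos_left (hx.trans_le ha) (Nat.cast_nonneg a)).le
  have hK := rpowSumConst_nonneg c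
  have h_sqrt_h : 1 ≤ √(h : ℝ) := one_le_sqrt.2 (Nat.one_le_cast.2 hh)
  have h_sqrt_q : 1 ≤ √(q : ℝ) := one_le_sqrt.2 (Nat.one_le_cast.2 hq)
  have h_sqrt_le : √(q : ℝ) ≤ q := sqrt_le_self_iff.2 (Or.inr (Nat.one_le_cast.2 hq))
  calc ‖∑ n ∈ Ico a b, (𝐞 (h * ((n : ℝ) ^ c / q)) : ℂ)‖
      ≤ rpowSumConst c * (L * x ^ (c / 2) * (√h / √q) + x ^ (1 - c / 2) * (√q / √h)) :=
        norm_sum_fourierChar_mul_rpow_div_le hc1 hc2 hx ha hb hq hh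
    _ ≤ rpowSumConst c * (L * x ^ (c / 2) * √h + x ^ (1 - c / 2) * (q * √h)) := by
        gcongr
        · exact div_le_self (sqrt_nonneg _) h_sqrt_q
        · exact (div_le_self (sqrt_nonneg _) h_sqrt_h).trans
            (h_sqrt_le.trans (le_mul_of_one_le_right (Nat.cast_nonneg q) h_sqrt_h))
    _ = rpowSumConst c * (L * x ^ (c / 2) + x ^ (1 - c / 2) * q) * √h := by ring

lemma abs_dvdCount_sub_le (hc1 : 1 < c) (hc2 : c < 2) (hx : 0 < x) (ha : x ≤ L * a)
    (hb : (b : ℝ) ≤ x + 1) (hq : 1 ≤ q) {Δ : ℝ} (hΔ : Δ ∈ Set.Ioc 0 1) :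
    |(dvdCount c a b q : ℝ) - #(Ico a b) / q| ≤ #(Ico a b) * Δ +
      2 * (rpowSumConst c * (L * x ^ (c / 2) + x ^ (1 - c / 2) * q) *
        ∑' h : ℕ, √h / (h : ℝ) ^ 2) / Δ := by
  have hq' : (1 : ℝ) ≤ q := Nat.one_le_cast.2 hq
  have h_theta : (1 : ℝ) / q ∈ Set.Ioc 0 1 :=
    ⟨by positivity, div_le_one_of_le₀ hq' (by positivity)⟩
  have h_weyl := weylTotal_le_of_norm_le_mul_sqrt fun h hh =>
    norm_sum_fourierChar_mul_rpow_div_le_mul_sqrt hc1 hc2 hx ha hb hq hh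
  rw [dvdCount_eq_card_fract_lt c a b hq, div_eq_mul_one_div (#(Ico a b) : ℝ),
    mul_comm (#(Ico a b) : ℝ) (1 / q)]
  refine (abs_card_filter_fract_lt_sub_le _ _ h_theta hΔ).trans ?_
  have hΔ := hΔ.1
  gcongr

lemma sum_norm_sum_fourierChar_mul_rpow_div_le (hc1 : 1 < c) (hc2 : c < 2) (hx : 0 < x)
    (ha : x ≤ L * a) (hb : (b : ℝ) ≤ x + 1) (hq : 1 ≤ q) (H : ℕ) :
    ∑ h ∈ Ico 1 H, ‖∑ n ∈ Ico a b, (𝐞 (h * ((n : ℝ) ^ c / q)) : ℂ)‖ ≤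
      H * (2 * rpowSumConst c * (L * x ^ (c / 2) * (√H / √q) + x ^ (1 - c / 2) * (√q / √H))) := by
  have hK := rpowSumConst_nonneg c
  have hL : 0 ≤ L := (pos_of_mul_pos_left (hx.trans_le ha) (Nat.cast_nonneg a)).le
  set P := L * x ^ (c / 2) * (√H / √q) with hP
  have hP_nonneg : 0 ≤ P := by positivity
  calc ∑ h ∈ Ico 1 H, ‖∑ n ∈ Ico a b, (𝐞 (h * ((n : ℝ) ^ c / q)) : ℂ)‖
      ≤ ∑ h ∈ Icc 1 H, rpowSumConst c * (P + x ^ (1 - c / 2) * (√q * (1 / √h))) := by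
        refine (sum_le_sum fun h hh => ?_).trans
          (sum_le_sum_of_subset_of_nonneg Ico_subset_Icc_self fun h _ _ => by positivity)
        rw [mul_one_div, hP]
        refine (norm_sum_fourierChar_mul_rpow_div_le hc1 hc2 hx ha hb hq (mem_Ico.1 hh).1).trans ?_
        gcongr
        exact (mem_Ico.1 hh).2.le
    _ = rpowSumConst c *
        (H * P + x ^ (1 - c / 2) * (√q * ∑ h ∈ Icc 1 H, 1 / √(h : ℝ))) := by
        rw [← mul_sum, sum_add_distrib, sum_const, Nat.card_Icc, Nat.add_sub_cancel, nsmul_eq_mul,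
          ← mul_sum, ← mul_sum]
    _ ≤ rpowSumConst c * (H * (2 * P) + x ^ (1 - c / 2) * (√q * (2 * √H))) := by
        gcongr
        · exact le_mul_of_one_le_left hP_nonneg one_le_two
        · exact sum_Icc_one_div_sqrt_le H
    _ = H * (2 * rpowSumConst c * (P + x ^ (1 - c / 2) * (√q / √H))) := by
        have h_div : √q * √(H : ℝ) = H * (√q / √H) := by
          rw [mul_div_left_comm, div_sqrt]
        linear_combination 2 * rpowSumConst c * x ^ (1 - c / 2) * h_div

lemma dvdCount_le_of_six_mul_le (hc1 : 1 < c) (hc2 : c < 2) (hx : 0 < x) (ha : x ≤ L * a)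
    (hb : (b : ℝ) ≤ x + 1) {H : ℕ} (hH : 1 ≤ H) (hHq : 6 * H ≤ q) :
    (dvdCount c a b q : ℝ) ≤ 4 * #(Ico a b) / H +
      16 * rpowSumConst c * (L * x ^ (c / 2) * (√H / √q) + x ^ (1 - c / 2) * (√q / √H)) := by
  have hq : 1 ≤ q := by omega
  have hH_pos : (0 : ℝ) < H := Nat.cast_pos.2 hH
  have h_sum := sum_norm_sum_fourierChar_mul_rpow_div_le hc1 hc2 hx ha hb hq H
  have h_sub : dvdCount c a b q ≤
      #((Ico a b).filter fun n : ℕ => Int.fract ((n : ℝ) ^ c / q) ≤ 1 / (6 * H)) := by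
    rw [dvdCount_eq_card_fract_lt c a b hq]
    refine card_le_card (monotone_filter_right _ fun n _ hn => hn.le.trans ?_)
    gcongr
    exact_mod_cast hHq
  calc (dvdCount c a b q : ℝ) ≤ _ := Nat.cast_le.2 h_sub
    _ ≤ _ := card_filter_fract_le_le _ _ hH
    _ ≤ _ := add_le_add_right (mul_le_mul_of_nonneg_left h_sum (by positivity)) _
    _ = _ := by
      rw [← mul_assoc, div_mul_cancel₀ _ hH_pos.ne']
      ring

end DvdCount

section Moebius

open scoped ArithmeticFunction.Moebius

lemma cubeFree_iff_floorRoot_eq_one {m : ℕ} : CubeFree m ↔ Nat.floorRoot 3 m = 1 := by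
  simp only [CubeFree, Nat.pow_dvd_iff_dvd_floorRoot, Nat.eq_one_iff_not_exists_prime_dvd]

lemma ite_cubeFree_eq_sum_moebius {m M : ℕ} (hm : m ≠ 0) (hM : m ≤ M) :
    (if CubeFree m then 1 else 0 : ℝ) = ∑ d ∈ Icc 1 M, if d ^ 3 ∣ m then (μ d : ℝ) else 0 := by
  have h_root : Nat.floorRoot 3 m ≠ 0 := Nat.floorRoot_ne_zero.2 ⟨three_ne_zero, hm⟩
  have h_divisors : {d ∈ Icc 1 M | d ^ 3 ∣ m} = (Nat.floorRoot 3 m).divisors := by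
    ext d
    simp only [mem_filter, mem_Icc, Nat.mem_divisors, ← Nat.pow_dvd_iff_dvd_floorRoot]
    refine ⟨fun h => ⟨h.2, h_root⟩, fun h => ⟨⟨?_, ?_⟩, h.1⟩⟩
    · exact Nat.pos_of_dvd_of_pos (Nat.pow_dvd_iff_dvd_floorRoot.1 h.1) (Nat.pos_of_ne_zero h_root)
    · exact (Nat.le_self_pow three_ne_zero d).trans
        ((Nat.le_of_dvd (Nat.pos_of_ne_zero hm) h.1).trans hM)
  rw [← sum_filter, h_divisors, ← Int.cast_sum, ← ArithmeticFunction.coe_mul_zeta_apply,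
    ArithmeticFunction.moebius_mul_coe_zeta, ArithmeticFunction.one_apply,
    Int.cast_ite, Int.cast_one, Int.cast_zero]
  exact if_congr cubeFree_iff_floorRoot_eq_one rfl rfl

lemma abs_moebius_mul_le (d : ℕ) (r : ℝ) : |(μ d : ℝ) * r| ≤ |r| := by
  rw [abs_mul]
  exact mul_le_of_le_one_left (abs_nonneg r) (mod_cast ArithmeticFunction.abs_moebius_le_one)

lemma summable_one_div_cube : Summable fun d : ℕ => 1 / (d : ℝ) ^ 3 :=
  Real.summable_one_div_nat_pow.2 (by norm_num)

lemma zeta3_pos : 0 < zeta3 :=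
  summable_one_div_cube.tsum_pos (fun _ => by positivity) 1 (by norm_num)

lemma riemannZeta_three : riemannZeta 3 = zeta3 := by
  rw [zeta3, Complex.ofReal_tsum, ← Nat.cast_ofNat (R := ℂ),
    zeta_nat_eq_tsum_of_gt_one (by norm_num)]
  push_cast
  rfl

lemma LSeries_moebius_three :
    LSeries (fun d => ((μ d : ℤ) : ℂ)) 3 = (∑' d : ℕ, (μ d : ℝ) * (1 / (d : ℝ) ^ 3) : ℝ) := by
  rw [Complex.ofReal_tsum]
  refine tsum_congr fun d => ?_
  rcases eq_or_ne d 0 with rfl | hd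
  · simp
  · rw [LSeries.term_of_ne_zero hd, div_eq_mul_one_div, ← Nat.cast_ofNat (R := ℂ),
      Complex.cpow_natCast]
    push_cast
    rfl

lemma hasSum_moebius_div_cube :
    HasSum (fun d : ℕ => (μ d : ℝ) * (1 / (d : ℝ) ^ 3)) (1 / zeta3) := by
  have h_summable : Summable fun d : ℕ => (μ d : ℝ) * (1 / (d : ℝ) ^ 3) :=
    summable_one_div_cube.abs.of_norm_bounded fun d => abs_moebius_mul_le d _
  have h_re : 1 < (3 : ℂ).re := by norm_num
  have h_mul := ArithmeticFunction.LSeries_zeta_mul_Lseries_moebius h_re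
  rw [ArithmeticFunction.LSeries_zeta_eq_riemannZeta h_re, riemannZeta_three,
    LSeries_moebius_three] at h_mul
  have h_tsum : zeta3 * ∑' d : ℕ, (μ d : ℝ) * (1 / (d : ℝ) ^ 3) = 1 := by
    rwa [← Complex.ofReal_mul, Complex.ofReal_eq_one] at h_mul
  rw [← eq_one_div_of_mul_eq_one_right h_tsum]
  exact h_summable.hasSum

lemma sum_Ioc_one_div_cube_le {m : ℕ} (hm : m ≠ 0) (M : ℕ) :
    ∑ d ∈ Ioc m M, 1 / (d : ℝ) ^ 3 ≤ 1 / (m : ℝ) ^ 2 := by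
  rcases le_total m M with hmM | hMm
  · calc ∑ d ∈ Ioc m M, 1 / (d : ℝ) ^ 3 ≤ ∑ d ∈ Ioc m M, 1 / (m : ℝ) * ((d : ℝ) ^ 2)⁻¹ := by
          refine sum_le_sum fun d hd => ?_
          have h_pos : (0 : ℝ) < m := Nat.cast_pos.2 (Nat.pos_of_ne_zero hm)
          have h_lt : (m : ℝ) < d := Nat.cast_lt.2 (mem_Ioc.1 hd).1
          have h_pos' := h_pos.trans h_lt
          rw [← div_eq_mul_inv, div_div, pow_succ']
          gcongr
      _ = 1 / (m : ℝ) * ∑ d ∈ Ioc m M, ((d : ℝ) ^ 2)⁻¹ := (mul_sum _ _ _).symm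
      _ ≤ 1 / (m : ℝ) * (1 / m) := by
          gcongr
          refine (sum_Ioc_inv_sq_le_sub hm hmM).trans ?_
          rw [one_div]
          exact sub_le_self _ (by positivity)
      _ = 1 / (m : ℝ) ^ 2 := by rw [one_div_mul_one_div, sq]
  · rw [Ioc_eq_empty_of_le hMm, sum_empty]
    positivity

lemma sum_Icc_add_sum_Ioc (f : ℕ → ℝ) {m M : ℕ} (h : m ≤ M) :
    ∑ d ∈ Icc 1 m, f d + ∑ d ∈ Ioc m M, f d = ∑ d ∈ Icc 1 M, f d :=
  sum_Ioc_consecutive f (Nat.zero_le m) h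

lemma abs_sum_moebius_div_cube_sub_le {m : ℕ} (hm : m ≠ 0) :
    |∑ d ∈ Icc 1 m, (μ d : ℝ) * (1 / (d : ℝ) ^ 3) - 1 / zeta3| ≤ 1 / (m : ℝ) ^ 2 := by
  set f : ℕ → ℝ := fun d => μ d * (1 / (d : ℝ) ^ 3)
  have h_lim : Tendsto (fun M => ∑ d ∈ Icc 1 M, f d) atTop (nhds (1 / zeta3)) := by
    have h_sums := hasSum_moebius_div_cube.tendsto_sum_nat.comp (tendsto_add_atTop_nat 1)
    refine h_sums.congr fun M => ?_
    rw [Function.comp_apply, sum_range_succ', Finset.range_eq_Ico, sum_Ico_add' f 0 M 1,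
      zero_add, Ico_add_one_right_eq_Icc, add_eq_left]
    simp only [ArithmeticFunction.map_zero, Int.cast_zero, zero_mul]
  refine le_of_tendsto (tendsto_const_nhds.sub h_lim).abs ?_
  filter_upwards [eventually_ge_atTop m] with M hM
  rw [← sum_Icc_add_sum_Ioc f hM, sub_add_cancel_left, abs_neg]
  calc |∑ d ∈ Ioc m M, f d| ≤ ∑ d ∈ Ioc m M, |1 / (d : ℝ) ^ 3| :=
        (abs_sum_le_sum_abs _ _).trans (sum_le_sum fun d _ => abs_moebius_mul_le d _)
    _ = ∑ d ∈ Ioc m M, 1 / (d : ℝ) ^ 3 := sum_congr rfl fun d _ => abs_of_nonneg (by positivity)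
    _ ≤ 1 / (m : ℝ) ^ 2 := sum_Ioc_one_div_cube_le hm M

variable {c : ℝ} {a b M : ℕ}

lemma card_cubeFree_eq_sum_moebius_mul_dvdCount (hM : ∀ n ∈ Ico a b, ⌊(n : ℝ) ^ c⌋₊ ∈ Icc 1 M) :
    (#((Ico a b).filter fun n : ℕ => CubeFree ⌊(n : ℝ) ^ c⌋₊) : ℝ) =
      ∑ d ∈ Icc 1 M, (μ d : ℝ) * dvdCount c a b (d ^ 3) := by
  rw [card_filter, Nat.cast_sum]
  simp only [dvdCount, card_filter, Nat.cast_sum, mul_sum]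
  rw [sum_comm]
  refine sum_congr rfl fun n hn => ?_
  obtain ⟨h_pos, h_le⟩ := mem_Icc.1 (hM n hn)
  push_cast
  rw [ite_cubeFree_eq_sum_moebius (Nat.ne_of_gt h_pos) h_le]
  simp only [mul_ite, mul_one, mul_zero]

theorem abs_card_cubeFree_sub_div_zeta3_le (hM : ∀ n ∈ Ico a b, ⌊(n : ℝ) ^ c⌋₊ ∈ Icc 1 M) {m : ℕ}
    (hm : m ≠ 0) (hmM : m ≤ M) :
    |(#((Ico a b).filter fun n : ℕ => CubeFree ⌊(n : ℝ) ^ c⌋₊) : ℝ) - #(Ico a b) / zeta3| ≤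
      ∑ d ∈ Icc 1 m, |(dvdCount c a b (d ^ 3) : ℝ) - #(Ico a b) / (d : ℝ) ^ 3| +
        ∑ d ∈ Ioc m M, (dvdCount c a b (d ^ 3) : ℝ) + #(Ico a b) / (m : ℝ) ^ 2 := by
  set N := (#(Ico a b) : ℝ)
  set D : ℕ → ℝ := fun d => dvdCount c a b (d ^ 3)
  have h_split : (#((Ico a b).filter fun n : ℕ => CubeFree ⌊(n : ℝ) ^ c⌋₊) : ℝ) - N / zeta3 =
      ∑ d ∈ Icc 1 m, (μ d : ℝ) * (D d - N / (d : ℝ) ^ 3) + ∑ d ∈ Ioc m M, (μ d : ℝ) * D d +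
        N * (∑ d ∈ Icc 1 m, (μ d : ℝ) * (1 / (d : ℝ) ^ 3) - 1 / zeta3) := by
    have h_main : ∑ d ∈ Icc 1 m, (μ d : ℝ) * (D d - N / (d : ℝ) ^ 3) =
        ∑ d ∈ Icc 1 m, (μ d : ℝ) * D d - N * ∑ d ∈ Icc 1 m, (μ d : ℝ) * (1 / (d : ℝ) ^ 3) := by
      rw [mul_sum, ← sum_sub_distrib]
      exact sum_congr rfl fun d _ => by ring
    rw [h_main, card_cubeFree_eq_sum_moebius_mul_dvdCount hM, ← sum_Icc_add_sum_Ioc _ hmM]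
    ring
  rw [h_split]
  refine (abs_add_three _ _ _).trans (add_le_add_three ?_ ?_ ?_)
  · exact (abs_sum_le_sum_abs _ _).trans (sum_le_sum fun d _ => abs_moebius_mul_le d _)
  · refine (abs_sum_le_sum_abs _ _).trans (sum_le_sum fun d _ => ?_)
    exact (abs_moebius_mul_le d _).trans_eq (abs_of_nonneg (Nat.cast_nonneg _))
  · rw [abs_mul, abs_of_nonneg (Nat.cast_nonneg _), ← mul_one_div N]
    gcongr
    exact abs_sum_moebius_div_cube_sub_le hm

end Moebius

section RangesOfDivisors

variable {c δ x : ℝ} {a b d : ℕ}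

lemma rpow_mul_rpow_le (hx : 1 ≤ x) {p q r : ℝ} (h : p + q ≤ r) : x ^ p * x ^ q ≤ x ^ r := by
  rw [← Real.rpow_add (zero_lt_one.trans_le hx)]
  exact Real.rpow_le_rpow_of_exponent_le hx h

lemma sum_Icc_one_div_le_rpow (hδ : 0 < δ) (hx : 1 ≤ x) {m : ℕ} (hm : (m : ℝ) ≤ x) :
    ∑ d ∈ Icc 1 m, 1 / (d : ℝ) ≤ (1 + 1 / δ) * x ^ δ := by
  have h_harmonic : ∑ d ∈ Icc 1 m, 1 / (d : ℝ) = harmonic m := by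
    rw [harmonic_eq_sum_Icc]
    push_cast
    simp only [one_div]
  rcases Nat.eq_zero_or_pos m with rfl | hm_pos
  · rw [Icc_eq_empty (by norm_num), sum_empty]
    positivity
  · have h_one : 1 ≤ x ^ δ := Real.one_le_rpow hx hδ.le
    calc ∑ d ∈ Icc 1 m, 1 / (d : ℝ) ≤ 1 + Real.log m :=
          h_harmonic.trans_le (harmonic_le_one_add_log m)
      _ ≤ 1 + Real.log x := by gcongr
      _ ≤ x ^ δ + x ^ δ / δ := add_le_add h_one (Real.log_le_rpow_div (by linarith) hδ)
      _ = (1 + 1 / δ) * x ^ δ := by ring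

lemma le_rpow_mul_of_rpow_one_sub_le (hx : 0 < x) (ha : x ^ (1 - δ) ≤ a) : x ≤ x ^ δ * a := by
  calc x = x ^ δ * x ^ (1 - δ) := by rw [← Real.rpow_add hx, add_sub_cancel, Real.rpow_one]
    _ ≤ x ^ δ * a := by gcongr

lemma one_le_of_rpow_le (hx : 0 < x) (ha : x ^ δ ≤ a) : 1 ≤ a :=
  Nat.cast_pos.1 ((Real.rpow_pos_of_pos hx δ).trans_le ha)

lemma abs_dvdCount_cube_sub_le (hc1 : 1 < c) (hδ : 0 < δ) (hδc : 24 * δ ≤ 2 - c) (hx : 1 ≤ x)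
    (ha : x ^ (1 - δ) ≤ a) (hb : (b : ℝ) ≤ x + 1) (hd : 1 ≤ d) (hdx : (d : ℝ) ≤ x ^ (2 * δ)) :
    |(dvdCount c a b (d ^ 3) : ℝ) - #(Ico a b) / (d : ℝ) ^ 3| ≤
      (1 + 4 * (rpowSumConst c * ∑' h : ℕ, √h / (h : ℝ) ^ 2)) * x ^ (1 - 3 * δ) := by
  have hx_pos : 0 < x := zero_lt_one.trans_le hx
  have h_card := card_Ico_le_of_cast_le (one_le_of_rpow_le hx_pos ha) hx_pos.le hb
  have h_series : 0 ≤ ∑' h : ℕ, √h / (h : ℝ) ^ 2 := tsum_nonneg fun h => by positivity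
  have hK := rpowSumConst_nonneg c
  have h_cube : ((d ^ 3 : ℕ) : ℝ) ≤ x ^ (6 * δ) := by
    calc ((d ^ 3 : ℕ) : ℝ) = (d : ℝ) ^ 3 := Nat.cast_pow d 3
      _ ≤ (x ^ (2 * δ)) ^ 3 := by gcongr
      _ = x ^ (6 * δ) := by
        rw [← Real.rpow_mul_natCast hx_pos.le]
        congr 1
        norm_num
        ring
  have h_width : x ^ (-(3 * δ)) ∈ Set.Ioc 0 1 :=
    ⟨Real.rpow_pos_of_pos hx_pos _, Real.rpow_le_one_of_one_le_of_nonpos hx (by linarith)⟩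
  have h_bound := abs_dvdCount_sub_le hc1 (by linarith) hx_pos
    (le_rpow_mul_of_rpow_one_sub_le hx_pos ha) hb (Nat.one_le_pow 3 d hd) h_width
  rw [Real.rpow_neg hx_pos.le, div_inv_eq_mul, ← Real.rpow_neg hx_pos.le, Nat.cast_pow] at h_bound
  have h_width_term : #(Ico a b) * x ^ (-(3 * δ)) ≤ x ^ (1 - 3 * δ) := by
    calc #(Ico a b) * x ^ (-(3 * δ)) ≤ x ^ (1 : ℝ) * x ^ (-(3 * δ)) := by
          rw [Real.rpow_one]
          gcongr
      _ ≤ x ^ (1 - 3 * δ) := rpow_mul_rpow_le hx (by linarith)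
  have h_weyl_term :
      (x ^ δ * x ^ (c / 2) + x ^ (1 - c / 2) * (d : ℝ) ^ 3) * x ^ (3 * δ) ≤
        2 * x ^ (1 - 3 * δ) := by
    calc (x ^ δ * x ^ (c / 2) + x ^ (1 - c / 2) * (d : ℝ) ^ 3) * x ^ (3 * δ)
        ≤ (x ^ (δ + c / 2) + x ^ (1 - c / 2 + 6 * δ)) * x ^ (3 * δ) := by
          rw [← Nat.cast_pow, Real.rpow_add hx_pos, Real.rpow_add hx_pos]
          gcongr
      _ ≤ x ^ (1 - 3 * δ) + x ^ (1 - 3 * δ) := by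
          rw [add_mul]
          exact add_le_add (rpow_mul_rpow_le hx (by linarith)) (rpow_mul_rpow_le hx (by linarith))
      _ = 2 * x ^ (1 - 3 * δ) := (two_mul _).symm
  linarith [mul_le_mul_of_nonneg_left h_weyl_term (mul_nonneg hK h_series)]

lemma sum_abs_dvdCount_cube_sub_le (hc1 : 1 < c) (hδ : 0 < δ) (hδc : 24 * δ ≤ 2 - c) (hx : 1 ≤ x)
    (ha : x ^ (1 - δ) ≤ a) (hb : (b : ℝ) ≤ x + 1) :
    ∑ d ∈ Icc 1 ⌊x ^ (2 * δ)⌋₊, |(dvdCount c a b (d ^ 3) : ℝ) - #(Ico a b) / (d : ℝ) ^ 3| ≤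
      (1 + 4 * (rpowSumConst c * ∑' h : ℕ, √h / (h : ℝ) ^ 2)) * x ^ (1 - δ) := by
  set K := 1 + 4 * (rpowSumConst c * ∑' h : ℕ, √h / (h : ℝ) ^ 2)
  have h_series : 0 ≤ ∑' h : ℕ, √h / (h : ℝ) ^ 2 := tsum_nonneg fun h => by positivity
  have hK : 0 ≤ K := by
    have := rpowSumConst_nonneg c
    positivity
  have h_floor : (⌊x ^ (2 * δ)⌋₊ : ℝ) ≤ x ^ (2 * δ) := Nat.floor_le (by positivity)
  calc ∑ d ∈ Icc 1 ⌊x ^ (2 * δ)⌋₊, |(dvdCount c a b (d ^ 3) : ℝ) - #(Ico a b) / (d : ℝ) ^ 3|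
      ≤ ∑ d ∈ Icc 1 ⌊x ^ (2 * δ)⌋₊, K * x ^ (1 - 3 * δ) := by
        refine sum_le_sum fun d hd => ?_
        obtain ⟨h_one, h_le⟩ := mem_Icc.1 hd
        exact abs_dvdCount_cube_sub_le hc1 hδ hδc hx ha hb h_one
          ((Nat.cast_le.2 h_le).trans h_floor)
    _ = K * (⌊x ^ (2 * δ)⌋₊ * x ^ (1 - 3 * δ)) := by
        rw [sum_const, nsmul_eq_mul, Nat.card_Icc, Nat.add_sub_cancel]
        ring
    _ ≤ K * (x ^ (2 * δ) * x ^ (1 - 3 * δ)) := by gcongr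
    _ ≤ K * x ^ (1 - δ) := by
        gcongr
        exact rpow_mul_rpow_le hx (by linarith)

lemma sqrt_mul_div_sqrt_cube {r s : ℝ} (hr : 0 < r) : √(r * s) / √(r ^ 3) = √s / r := by
  rw [Real.sqrt_mul hr.le, pow_succ, Real.sqrt_mul (sq_nonneg r), Real.sqrt_sq hr.le, mul_comm r,
    mul_div_mul_left _ _ (Real.sqrt_pos.2 hr).ne']

lemma six_mul_mul_ceil_le_cube {X : ℝ} (hX : 12 ≤ X) (hd : X ≤ d) : 6 * (d * ⌈X⌉₊) ≤ d ^ 3 := by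
  have h_ceil : (⌈X⌉₊ : ℝ) ≤ X + 1 := (Nat.ceil_lt_add_one (by linarith)).le
  have h_sq : 6 * ⌈X⌉₊ ≤ d ^ 2 := by
    rify
    nlinarith
  calc 6 * (d * ⌈X⌉₊) = d * (6 * ⌈X⌉₊) := mul_left_comm _ _ _
    _ ≤ d * d ^ 2 := Nat.mul_le_mul_left d h_sq
    _ = d ^ 3 := (pow_succ' d 2).symm

lemma dvdCount_cube_le (hc1 : 1 < c) (hδ : 0 < δ) (hδc : 24 * δ ≤ 2 - c) (hx : 1 ≤ x)
    (ha : x ^ (1 - δ) ≤ a) (hb : (b : ℝ) ≤ x + 1) (hX : 12 ≤ x ^ (2 * δ))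
    (hd : x ^ (2 * δ) ≤ d) :
    (dvdCount c a b (d ^ 3) : ℝ) ≤
      (4 + 32 * rpowSumConst c) * (x ^ (1 - 2 * δ) * (1 / d) + x ^ (1 - c / 2) * d) := by
  have hx_pos : 0 < x := zero_lt_one.trans_le hx
  have h_card := card_Ico_le_of_cast_le (one_le_of_rpow_le hx_pos ha) hx_pos.le hb
  have hK := rpowSumConst_nonneg c
  set X := x ^ (2 * δ) with hX_def
  set B := ⌈X⌉₊
  have hXB : X ≤ B := Nat.le_ceil X
  have hBX : (B : ℝ) ≤ X + 1 := (Nat.ceil_lt_add_one (by linarith)).le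
  have hd_pos : (0 : ℝ) < d := by linarith
  have hB_one : (1 : ℝ) ≤ B := by linarith
  have h_bound := dvdCount_le_of_six_mul_le hc1 (by linarith) hx_pos
    (le_rpow_mul_of_rpow_one_sub_le hx_pos ha) hb
    (Nat.mul_pos (Nat.cast_pos.1 hd_pos) (Nat.one_le_cast.1 hB_one))
    (six_mul_mul_ceil_le_cube hX hd)
  rw [← inv_div (√((d * B : ℕ) : ℝ)), Nat.cast_mul, Nat.cast_pow, sqrt_mul_div_sqrt_cube hd_pos,
    inv_div] at h_bound
  have h_card_term : #(Ico a b) / (d * B : ℝ) ≤ x ^ (1 - 2 * δ) * (1 / d) := by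
    calc #(Ico a b) / (d * B : ℝ) ≤ x / (d * X) := by gcongr
      _ = x ^ (1 - 2 * δ) * (1 / d) := by
        rw [Real.rpow_sub hx_pos, Real.rpow_one, mul_one_div, div_div, mul_comm X]
  have h_sqrt : √(B : ℝ) ≤ 2 * x ^ δ := by
    refine Real.sqrt_le_iff.2 ⟨by positivity, ?_⟩
    have hX_sq : X = (x ^ δ) ^ 2 := by
      rw [← Real.rpow_mul_natCast hx_pos.le, mul_comm δ, hX_def, Nat.cast_ofNat]
    linarith
  have h_low_term : x ^ δ * x ^ (c / 2) * (√B / d) ≤ 2 * (x ^ (1 - 2 * δ) * (1 / d)) := by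
    calc x ^ δ * x ^ (c / 2) * (√B / d) ≤ x ^ δ * x ^ (c / 2) * (2 * x ^ δ / d) := by gcongr
      _ = 2 * (x ^ (δ + c / 2) * x ^ δ * (1 / d)) := by rw [Real.rpow_add hx_pos]; ring
      _ ≤ 2 * (x ^ (1 - 2 * δ) * (1 / d)) := by
        gcongr
        exact rpow_mul_rpow_le hx (by linarith)
  have h_high_term : x ^ (1 - c / 2) * (d / √B) ≤ x ^ (1 - c / 2) * d := by
    gcongr
    exact div_le_self hd_pos.le (Real.one_le_sqrt.2 hB_one)
  have h_high_nonneg : 0 ≤ x ^ (1 - c / 2) * d := by positivity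
  rw [mul_div_assoc] at h_bound
  nlinarith [mul_le_mul_of_nonneg_left (add_le_add h_low_term h_high_term) hK]

lemma sum_dvdCount_cube_le (hc1 : 1 < c) (hδ : 0 < δ) (hδc : 24 * δ ≤ 2 - c) (hx : 1 ≤ x)
    (ha : x ^ (1 - δ) ≤ a) (hb : (b : ℝ) ≤ x + 1) (hX : 12 ≤ x ^ (2 * δ)) :
    ∑ d ∈ Ioc ⌊x ^ (2 * δ)⌋₊ ⌊x ^ (c / 4 - δ / 2)⌋₊, (dvdCount c a b (d ^ 3) : ℝ) ≤
      (4 + 32 * rpowSumConst c) * (2 + 1 / δ) * x ^ (1 - δ) := by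
  set K := 4 + 32 * rpowSumConst c
  have hK : 0 ≤ K := by linarith [rpowSumConst_nonneg c]
  set Y := x ^ (c / 4 - δ / 2) with hY
  set I := Ioc ⌊x ^ (2 * δ)⌋₊ ⌊Y⌋₊
  have hY_nonneg : 0 ≤ Y := by positivity
  have h_floor : (⌊Y⌋₊ : ℝ) ≤ Y := Nat.floor_le hY_nonneg
  have hYx : Y ≤ x := Real.rpow_le_self_of_one_le hx (by linarith)
  have h_harmonic : ∑ d ∈ I, 1 / (d : ℝ) ≤ (1 + 1 / δ) * x ^ δ := by
    refine (sum_le_sum_of_subset_of_nonneg (fun d hd => ?_) fun d _ _ => by positivity).trans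
      (sum_Icc_one_div_le_rpow hδ hx (h_floor.trans hYx))
    obtain ⟨h_lt, h_le⟩ := mem_Ioc.1 hd
    exact mem_Icc.2 ⟨Nat.one_le_of_lt h_lt, h_le⟩
  have h_linear : ∑ d ∈ I, (d : ℝ) ≤ Y * Y := by
    calc ∑ d ∈ I, (d : ℝ) ≤ #I • Y :=
          sum_le_card_nsmul _ _ _ fun d hd => (Nat.cast_le.2 (mem_Ioc.1 hd).2).trans h_floor
      _ ≤ Y * Y := by
          rw [nsmul_eq_mul, Nat.card_Ioc]
          gcongr
          exact (Nat.cast_le.2 (Nat.sub_le _ _)).trans h_floor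
  calc ∑ d ∈ I, (dvdCount c a b (d ^ 3) : ℝ)
      ≤ ∑ d ∈ I, K * (x ^ (1 - 2 * δ) * (1 / d) + x ^ (1 - c / 2) * d) :=
        sum_le_sum fun d hd => dvdCount_cube_le hc1 hδ hδc hx ha hb hX
          (Nat.lt_of_floor_lt (mem_Ioc.1 hd).1).le
    _ = K * (x ^ (1 - 2 * δ) * ∑ d ∈ I, 1 / (d : ℝ) + x ^ (1 - c / 2) * ∑ d ∈ I, (d : ℝ)) := by
        rw [← mul_sum, sum_add_distrib, ← mul_sum, ← mul_sum]
    _ ≤ K * (x ^ (1 - 2 * δ) * ((1 + 1 / δ) * x ^ δ) + x ^ (1 - c / 2) * (Y * Y)) := by gcongr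
    _ = K * ((1 + 1 / δ) * (x ^ (1 - 2 * δ) * x ^ δ) + x ^ (1 - c / 2) * x ^ (c / 2 - δ)) := by
        rw [hY, ← Real.rpow_add (by linarith)]
        ring_nf
    _ ≤ K * ((1 + 1 / δ) * x ^ (1 - δ) + x ^ (1 - δ)) := by
        gcongr
        · exact rpow_mul_rpow_le hx (by linarith)
        · exact rpow_mul_rpow_le hx (by linarith)
    _ = K * (2 + 1 / δ) * x ^ (1 - δ) := by ring

lemma div_floor_rpow_sq_le (hx : 1 ≤ x) {p q r : ℝ} (hq : 0 ≤ q) (h : p ≤ 2 * q + r) :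
    x ^ p / (⌊x ^ q⌋₊ : ℝ) ^ 2 ≤ 4 * x ^ r := by
  have hx_pos : 0 < x := zero_lt_one.trans_le hx
  have h_one : 1 ≤ x ^ q := Real.one_le_rpow hx hq
  have h_floor : x ^ q / 2 ≤ ⌊x ^ q⌋₊ := by
    have h_lt := Nat.lt_floor_add_one (x ^ q)
    have h_floor_one : (1 : ℝ) ≤ ⌊x ^ q⌋₊ := Nat.one_le_cast.2 ((Nat.one_le_floor_iff _).2 h_one)
    linarith
  calc x ^ p / (⌊x ^ q⌋₊ : ℝ) ^ 2 ≤ x ^ (2 * q + r) / (x ^ q / 2) ^ 2 := by gcongr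
    _ = 4 * x ^ r := by
      rw [Real.rpow_add hx_pos, two_mul, Real.rpow_add hx_pos]
      field_simp
      norm_num

lemma sum_dvdCount_cube_tail_le (hc : 1 ≤ c) (hδc : 4 * δ ≤ 2 - c) (hx : 1 ≤ x) (ha : 1 ≤ a)
    (hb : (b : ℝ) ≤ x + 1) (M : ℕ) :
    ∑ d ∈ Ioc ⌊x ^ (c / 4 - δ / 2)⌋₊ M, (dvdCount c a b (d ^ 3) : ℝ) ≤ 4 * x ^ (1 - δ) := by
  have hx_nonneg : 0 ≤ x := by linarith
  have h_floor : ⌊x ^ (c / 4 - δ / 2)⌋₊ ≠ 0 :=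
    (Nat.floor_pos.2 (Real.one_le_rpow hx (by linarith))).ne'
  calc ∑ d ∈ Ioc ⌊x ^ (c / 4 - δ / 2)⌋₊ M, (dvdCount c a b (d ^ 3) : ℝ)
      ≤ ∑ d ∈ Ioc ⌊x ^ (c / 4 - δ / 2)⌋₊ M, x ^ c * (1 / (d : ℝ) ^ 3) := by
        refine sum_le_sum fun d _ => (dvdCount_le_rpow_div hc ha hx_nonneg hb).trans_eq ?_
        rw [Nat.cast_pow, mul_one_div]
    _ ≤ x ^ c / (⌊x ^ (c / 4 - δ / 2)⌋₊ : ℝ) ^ 2 := by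
        rw [← mul_sum, ← mul_one_div (x ^ c)]
        gcongr
        exact sum_Ioc_one_div_cube_le h_floor M
    _ ≤ 4 * x ^ (1 - δ) := div_floor_rpow_sq_le hx (by linarith) (by linarith)

theorem exists_abs_card_cubeFree_Ico_sub_le (hc1 : 1 < c) (hδ : 0 < δ) (hδc : 24 * δ ≤ 2 - c) :
    ∃ K : ℝ, ∀ ⦃x : ℝ⦄ ⦃a b : ℕ⦄, 1 ≤ x → 12 ≤ x ^ (2 * δ) → x ^ (1 - δ) ≤ a → (b : ℝ) ≤ x + 1 →
      |(#((Ico a b).filter fun n : ℕ => CubeFree ⌊(n : ℝ) ^ c⌋₊) : ℝ) - #(Ico a b) / zeta3| ≤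
        K * x ^ (1 - δ) := by
  refine ⟨(1 + 4 * (rpowSumConst c * ∑' h : ℕ, √h / (h : ℝ) ^ 2)) +
    ((4 + 32 * rpowSumConst c) * (2 + 1 / δ) + 4) + 4, fun x a b hx hX ha hb => ?_⟩
  have hx_pos : 0 < x := zero_lt_one.trans_le hx
  have ha_one : 1 ≤ a := one_le_of_rpow_le hx_pos ha
  have h_floor_mono {p q : ℝ} (h : p ≤ q) : ⌊x ^ p⌋₊ ≤ ⌊x ^ q⌋₊ :=
    Nat.floor_le_floor (Real.rpow_le_rpow_of_exponent_le hx h)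
  have h_low : ⌊x ^ (2 * δ)⌋₊ ≤ ⌊x ^ (c / 4 - δ / 2)⌋₊ := h_floor_mono (by linarith)
  have h_high : ⌊x ^ (c / 4 - δ / 2)⌋₊ ≤ ⌊x ^ c⌋₊ := h_floor_mono (by linarith)
  have h_values : ∀ n ∈ Ico a b, ⌊(n : ℝ) ^ c⌋₊ ∈ Icc 1 ⌊x ^ c⌋₊ := fun n hn => by
    obtain ⟨han, hnb⟩ := mem_Ico.1 hn
    have h_one : (1 : ℝ) ≤ n := Nat.one_le_cast.2 (ha_one.trans han)
    have h_succ : (n : ℝ) + 1 ≤ b := mod_cast hnb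
    have h_le : (n : ℝ) ≤ x := by linarith
    exact mem_Icc.2 ⟨(Nat.one_le_floor_iff _).2 (Real.one_le_rpow h_one (by linarith)),
      Nat.floor_le_floor (by gcongr)⟩
  have h_floor_ne : ⌊x ^ (2 * δ)⌋₊ ≠ 0 := (Nat.floor_pos.2 (by linarith)).ne'
  have h_truncation : #(Ico a b) / (⌊x ^ (2 * δ)⌋₊ : ℝ) ^ 2 ≤ 4 * x ^ (1 - δ) := by
    calc #(Ico a b) / (⌊x ^ (2 * δ)⌋₊ : ℝ) ^ 2 ≤ x ^ (1 : ℝ) / (⌊x ^ (2 * δ)⌋₊ : ℝ) ^ 2 := by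
          rw [Real.rpow_one]
          gcongr
          exact card_Ico_le_of_cast_le ha_one hx_pos.le hb
      _ ≤ 4 * x ^ (1 - δ) := div_floor_rpow_sq_le hx (by linarith) (by linarith)
  refine (abs_card_cubeFree_sub_div_zeta3_le h_values h_floor_ne (h_low.trans h_high)).trans ?_
  rw [← sum_Ioc_consecutive _ h_low h_high, add_mul, add_mul, add_mul _ 4]
  exact add_le_add_three (sum_abs_dvdCount_cube_sub_le hc1 hδ hδc hx ha hb)
    (add_le_add (sum_dvdCount_cube_le hc1 hδ hδc hx ha hb hX)
      (sum_dvdCount_cube_tail_le hc1.le (by linarith) hx ha_one hb _)) h_truncation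

end RangesOfDivisors

section InitialSegment

-- A filter predicate on `n : ℝ` over a natural number interval elaborates to this coerced finset.
lemma card_filter_bind_pure_natCast (s : Finset ℕ) (p : ℝ → Prop) [DecidablePred p] :
    #((do let n ← s; pure (n : ℝ)).filter p) = #(s.filter fun n : ℕ => p n) := by
  rw [bind_pure_comp, fmap_def, filter_image, card_image_of_injective _ Nat.cast_injective]

lemma card_filter_Icc_one_eq_add (p : ℕ → Prop) [DecidablePred p] {k m : ℕ} (hk : 1 ≤ k)
    (hkm : k ≤ m + 1) :
    #((Icc 1 m).filter p) = #((Ico 1 k).filter p) + #((Ico k (m + 1)).filter p) := by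
  simp only [← Ico_add_one_right_eq_Icc, card_filter]
  exact (sum_Ico_consecutive _ hk hkm).symm

lemma abs_card_filter_Icc_sub_le (p : ℕ → Prop) [DecidablePred p] {ζ : ℝ} (hζ : 0 < ζ) {x y : ℝ}
    (hy : 1 ≤ y) (hyx : y ≤ x) :
    |(#((Icc 1 ⌊x⌋₊).filter p) : ℝ) - x / ζ| ≤
      |(#((Ico ⌈y⌉₊ (⌊x⌋₊ + 1)).filter p) : ℝ) - #(Ico ⌈y⌉₊ (⌊x⌋₊ + 1)) / ζ| +
        (1 + 2 / ζ) * y := by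
  have h_floor : (⌊x⌋₊ : ℝ) ≤ x := Nat.floor_le (by linarith)
  have h_floor' : x < ⌊x⌋₊ + 1 := Nat.lt_floor_add_one x
  have h_ceil : y ≤ ⌈y⌉₊ := Nat.le_ceil y
  have h_ceil' : (⌈y⌉₊ : ℝ) < y + 1 := Nat.ceil_lt_add_one (by linarith)
  have h_one : 1 ≤ ⌈y⌉₊ := Nat.one_le_cast.1 (hy.trans h_ceil)
  have h_le : ⌈y⌉₊ ≤ ⌊x⌋₊ + 1 := Nat.ceil_le.2 (by push_cast; linarith)
  have h_card : (#(Ico ⌈y⌉₊ (⌊x⌋₊ + 1)) : ℝ) = ⌊x⌋₊ + 1 - ⌈y⌉₊ := by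
    rw [Nat.card_Ico, Nat.cast_sub h_le, Nat.cast_add_one]
  set A : ℝ := (#((Ico 1 ⌈y⌉₊).filter p) : ℝ) with hA
  have hA_le : A ≤ y := by
    have h_card_le : #((Ico 1 ⌈y⌉₊).filter p) ≤ ⌈y⌉₊ - 1 :=
      (card_filter_le _ _).trans_eq (Nat.card_Ico 1 _)
    have h_cast : A ≤ ((⌈y⌉₊ - 1 : ℕ) : ℝ) := Nat.cast_le.2 h_card_le
    rw [Nat.cast_sub h_one, Nat.cast_one] at h_cast
    linarith
  have h_length : |#(Ico ⌈y⌉₊ (⌊x⌋₊ + 1)) - x| ≤ 2 * y := by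
    rw [h_card, abs_le]
    constructor <;> linarith
  calc |(#((Icc 1 ⌊x⌋₊).filter p) : ℝ) - x / ζ|
      = |((#((Ico ⌈y⌉₊ (⌊x⌋₊ + 1)).filter p) : ℝ) - #(Ico ⌈y⌉₊ (⌊x⌋₊ + 1)) / ζ) + A +
          (#(Ico ⌈y⌉₊ (⌊x⌋₊ + 1)) - x) / ζ| := by
        rw [card_filter_Icc_one_eq_add p h_one h_le, Nat.cast_add, ← hA]
        congr 1
        ring
    _ ≤ |(#((Ico ⌈y⌉₊ (⌊x⌋₊ + 1)).filter p) : ℝ) - #(Ico ⌈y⌉₊ (⌊x⌋₊ + 1)) / ζ| + y +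
          2 * y / ζ := by
        refine (abs_add_three _ _ _).trans (add_le_add_three le_rfl ?_ ?_)
        · rwa [abs_of_nonneg (Nat.cast_nonneg _)]
        · rw [abs_div, abs_of_pos hζ]
          gcongr
    _ = _ := by ring

end InitialSegment

theorem isBigO_card_cubeFree_sub_div_zeta3 {c δ : ℝ} (hc1 : 1 < c) (hδ : 0 < δ)
    (hδc : 24 * δ ≤ 2 - c) :
    (fun x : ℝ => (#((Icc 1 ⌊x⌋₊).filter fun n : ℕ => CubeFree ⌊(n : ℝ) ^ c⌋₊) : ℝ) - x / zeta3)
      =O[atTop] fun x : ℝ => x ^ (1 - δ) := by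
  obtain ⟨K, hK⟩ := exists_abs_card_cubeFree_Ico_sub_le hc1 hδ hδc
  have h_eventually := (tendsto_rpow_atTop (mul_pos two_pos hδ)).eventually_ge_atTop 12
  refine IsBigO.of_bound (K + (1 + 2 / zeta3)) ?_
  filter_upwards [h_eventually, eventually_ge_atTop 1] with x hX hx
  have hx_nonneg : 0 ≤ x := by linarith
  have hb : ((⌊x⌋₊ + 1 : ℕ) : ℝ) ≤ x + 1 := by
    rw [Nat.cast_add_one]
    gcongr
    exact Nat.floor_le hx_nonneg
  rw [Real.norm_eq_abs, Real.norm_of_nonneg (Real.rpow_nonneg hx_nonneg _), add_mul]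
  exact (abs_card_filter_Icc_sub_le _ zeta3_pos (Real.one_le_rpow hx (by linarith))
    (Real.rpow_le_self_of_one_le hx (by linarith))).trans
      (add_le_add_left (hK hx hX (Nat.le_ceil _) hb) _)

lemma isBigO_rpow_rpow_atTop {p q : ℝ} (h : p ≤ q) :
    (fun x : ℝ => x ^ p) =O[atTop] fun x : ℝ => x ^ q := by
  refine IsBigO.of_norm_eventuallyLE ?_
  filter_upwards [eventually_ge_atTop 1] with x hx
  rw [Real.norm_of_nonneg (Real.rpow_nonneg (by linarith) _)]
  exact Real.rpow_le_rpow_of_exponent_le hx h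

theorem cubefree_floor_count_nat_general (c ε : ℝ) (hc1 : 1 < c) (hc2 : c < 2)
    (hε : ε ≤ (2 - c) / 24) :
    (fun x : ℝ =>
        (((Finset.Icc 1 ⌊x⌋₊).filter (fun n => CubeFree ⌊(n : ℝ) ^ c⌋₊)).card : ℝ)
          - x / zeta3)
      =O[atTop] fun x : ℝ => x ^ (1 - ε) := by
  simp only [card_filter_bind_pure_natCast]
  exact (isBigO_card_cubeFree_sub_div_zeta3 hc1 (by linarith) (by linarith)).trans
    (isBigO_rpow_rpow_atTop (sub_le_sub_left hε 1))

theorem cubefree_floor_count_nat (c ε : ℝ) (hc1 : 1 < c) (hc2 : c < 11 / 6)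
    (hε1 : 0 < ε) (hε2 : ε < 1 / 10 ^ 10) :
    (fun x : ℝ =>
        (((Finset.Icc 1 ⌊x⌋₊).filter (fun n => CubeFree ⌊(n : ℝ) ^ c⌋₊)).card : ℝ)
          - x / zeta3)
      =O[atTop] fun x : ℝ => x ^ (1 - ε) :=
  cubefree_floor_count_nat_general c ε hc1 (by linarith) (by norm_num at hε2; linarith)
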